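/- arXiv:1409.6243 — 4 statements merged into one kernel-verified Lean document; each statement's English description precedes it below -/
import Mathlib

section
/- Let t ≥ 1 and N ≥ 1 be integers and let q ∈ ℂ with 0 < |q| < 1. Then (1 - q^N) · q^{-t} Σ_{1 ≤ k_1 ≤ … ≤ k_t ≤ N} (q^{1+N};q)_{k_t-1} (q^{1-N};q)_{k_t-1} q^{k_t} Π_{i=1}^{t-1} q^{k_i^2} [k_{i+1} + k_i - i + 2·Σ_{j=1}^{i-1} k_j choose k_{i+1} - k_i]_q = (-1)^N q^{-t + N((2t+1)N+1)/2} Σ_{k=-N}^{N-1} (-1)^k q^{-(2t+1)k(k+1)/2 + k}. (Both sides are finite sums; all exponents of q are integers. The left side is (1-q^N)·U_t(-q^N; q), and the identity expresses that U_t(-q^N;q) is the N-colored Jones polynomial of the left-handed torus knot T*_{(2,2t+1)}.) -/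
open Finset

/-- The finite q-Pochhammer symbol `(a;q)_n`. -/
noncomputable def qPoch (q a : ℂ) (n : ℕ) : ℂ := ∏ j ∈ Finset.range n, (1 - a * q ^ j)

/-- The Gaussian binomial coefficient `[n choose k]_q`, zero outside `0 ≤ k ≤ n`. -/
noncomputable def qBinom (q : ℂ) (n k : ℤ) : ℂ :=
  if 0 ≤ k ∧ k ≤ n then
    ∏ j ∈ Finset.range k.toNat, (1 - q ^ (n - k + (j : ℤ) + 1)) / (1 - q ^ ((j : ℤ) + 1))
  else 0

/-- The product `Π_{i=1}^{t-1} q^{k_i^2} [k_{i+1}+k_i-i+2Σ_{j<i}k_j choose k_{i+1}-k_i]_q`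
(tuple of length `t+1`, i.e. the paper's `t` equals `t+1`). -/
noncomputable def UtProd (q : ℂ) (t : ℕ) (K : Fin (t+1) → ℕ) : ℂ :=
  ∏ i : Fin t, (q ^ (K i.castSucc ^ 2) *
    qBinom q ((K i.succ : ℤ) + (K i.castSucc : ℤ) - ((i : ℕ) + 1)
        + 2 * ∑ j ∈ Finset.univ.filter (fun j : Fin (t+1) => (j : ℕ) < (i : ℕ)), (K j : ℤ))
      ((K i.succ : ℤ) - (K i.castSucc : ℤ)))


namespace S5

def tr : ℕ → ℕ
  | 0 => 0
  | n+1 => tr n + n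

lemma tr_add (i j : ℕ) : tr (i+j) = tr i + tr j + i*j := by
  induction j with
  | zero => simp [tr]
  | succ j ih => rw [← add_assoc, tr, tr, ih]; ring

lemma tr_two (n : ℕ) : 2 * tr (n+1) = n * (n+1) := by
  induction n with
  | zero => simp [tr]
  | succ n ih => rw [tr, mul_add, ih]; ring

noncomputable def G (u : ℂ) : ℕ → ℕ → ℂ
  | _, 0 => 1
  | 0, _+1 => 0
  | n+1, k+1 => u^(k+1) * G u n (k+1) + G u n k

lemma G_zero (u : ℂ) (n : ℕ) : G u n 0 = 1 := by cases n <;> rfl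

lemma G_gt (u : ℂ) (n k : ℕ) (h : n < k) : G u n k = 0 := by
  induction n generalizing k with
  | zero => obtain ⟨k, rfl⟩ : ∃ l, k = l+1 := ⟨k-1, by omega⟩; rfl
  | succ n ih =>
    obtain ⟨k, rfl⟩ : ∃ l, k = l+1 := ⟨k-1, by omega⟩
    rw [G, ih _ (by omega), ih _ (by omega)]; simp

lemma G_self (u : ℂ) (n : ℕ) : G u n n = 1 := by
  induction n with
  | zero => rfl
  | succ n ih => rw [G, ih, G_gt _ _ _ (by omega)]; simp

lemma qP_zero (q a : ℂ) : qPoch q a 0 = 1 := by simp [qPoch]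

lemma qP_succ (q a : ℂ) (n : ℕ) : qPoch q a (n+1) = qPoch q a n * (1 - a*q^n) := by
  simp [qPoch, Finset.prod_range_succ]

lemma qP_add (q a : ℂ) (m n : ℕ) : qPoch q a (m+n) = qPoch q a m * qPoch q (a*q^m) n := by
  simp only [qPoch, Finset.prod_range_add]
  congr 1
  apply Finset.prod_congr rfl
  intros; ring

lemma qP_succ' (q a : ℂ) (n : ℕ) : qPoch q a (n+1) = (1-a) * qPoch q (a*q) n := by
  rw [add_comm, qP_add]; simp [qPoch]

lemma G_closed (u : ℂ) (i j : ℕ) :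
    G u (i+j) i * qPoch u u i * qPoch u u j = qPoch u u (i+j) := by
  obtain ⟨n, hn⟩ : ∃ n, n = i + j := ⟨_, rfl⟩
  induction n generalizing i j with
  | zero =>
    obtain rfl : i = 0 := by omega
    obtain rfl : j = 0 := by omega
    simp [qP_zero, G_zero]
  | succ n ih =>
    cases i with
    | zero => simp [qP_zero, G_zero]
    | succ i =>
      cases j with
      | zero => simp [qP_zero, G_self]
      | succ j =>
        have h1 := ih (i+1) j (by omega)
        have h2 := ih i (j+1) (by omega)
        have e : i + 1 + (j+1) = (i + 1 + j) + 1 := by ring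
        have e' : i + (j+1) = i + 1 + j := by ring
        rw [e'] at h2
        rw [e, G, qP_succ u u (i+1+j)]
        have hj := qP_succ u u j
        have hi := qP_succ u u i
        rw [hj] at h2 ⊢
        rw [hi] at h1 ⊢
        linear_combination (u^(i+1) * (1 - u*u^j)) * h1 + (1-u*u^i) * h2

lemma GS (u : ℂ) (n : ℕ) (F : ℕ → ℂ) :
    ∑ i ∈ range (n+2), G u (n+1) i * F i
      = ∑ i ∈ range (n+1), G u n i * (u^i * F i + F (i+1)) := by
  rw [Finset.sum_range_succ']
  have h : ∑ i ∈ range (n+1), G u n i * (u^i * F i) =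
      ∑ i ∈ range (n+1), G u n (i+1) * (u^(i+1) * F (i+1)) + F 0 := by
    have h1 := Finset.sum_range_succ (fun i => G u n i * (u^i * F i)) (n+1)
    rw [Finset.sum_range_succ'] at h1
    simp only [G_gt u n (n+1) (by omega), G_zero] at h1
    simp only [zero_mul, add_zero, pow_zero, one_mul] at h1
    exact h1.symm
  simp only [mul_add (G u n _)]
  rw [Finset.sum_add_distrib, h, G_zero, one_mul, add_right_comm, ← Finset.sum_add_distrib]
  congr 1
  apply Finset.sum_congr rfl
  intro i _
  rw [G]; ring

lemma pq_pow {q p : ℂ} (h : q * p = 1) (n : ℕ) : q^n * p^n = 1 := by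
  rw [← mul_pow, h, one_pow]

lemma star {q p : ℂ} (h : q * p = 1) (r : ℕ) (e z : ℂ) :
    ∑ m ∈ range (r+1), G q r m * ((-1)^m * q^(tr m + m) * p^(r*m) * qPoch q e m * qPoch q z m)
      = ∑ j ∈ range (r+1), G q r j * (qPoch q z j * e^j * z^(r-j)) := by
  induction r generalizing e z with
  | zero => simp [qP_zero, tr]
  | succ r ih =>
    rw [GS, GS]
    have h1 := ih e z
    have h2 := ih (e*q) (z*q)
    trans (∑ j ∈ range (r+1), G q r j * (qPoch q z j * e^j * z^(r-j))) -
      p^r * (1-e) * (1-z) *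
        ∑ j ∈ range (r+1), G q r j * (qPoch q (z*q) j * (e*q)^j * (z*q)^(r-j))
    · rw [← h1, ← h2, Finset.mul_sum, ← Finset.sum_sub_distrib]
      apply Finset.sum_congr rfl
      intro m _
      rw [mul_left_comm _ (G q r m), ← mul_sub]
      congr 1
      rw [qP_succ', qP_succ', tr]
      have e1 := pq_pow h m
      have e2 : p^((r+1)*(m+1)) = p^(r*m) * p^m * p^r * p := by rw [← pow_add, ← pow_add, ← pow_succ]; congr 1; ring
      have e3 : p^((r+1)*m) = p^(r*m) * p^m := by rw [← pow_add]; congr 1; ring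
      rw [e2, e3, show tr m + m + (m+1) = tr m + m + m + 1 by ring, pow_succ, pow_succ, pow_add _ (tr m + m) m]
      linear_combination ((-1)^m * q^(tr m + m) * p^(r*m) * qPoch q e m * qPoch q z m - (-1)^m * q^(tr m + m) * p^(r*m) * p^r * (1-e) * qPoch q (e*q) m * ((1-z) * qPoch q (z*q) m) * q * p) * e1 - (-1)^m * q^(tr m + m) * p^(r*m) * p^r * (1-e) * qPoch q (e*q) m * ((1-z) * qPoch q (z*q) m) * h
    · rw [Finset.mul_sum, ← Finset.sum_sub_distrib]
      apply Finset.sum_congr rfl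
      intro j hj
      obtain ⟨d, rfl⟩ : ∃ d, r = j + d := ⟨r - j, by simp at hj; omega⟩
      rw [mul_left_comm _ (G q (j+d) j), ← mul_sub]
      congr 1
      rw [show j+d-j = d by omega, show j+d+1-j = d+1 by omega, show j+d+1-(j+1) = d by omega]
      have e1 := pq_pow h (j+d)
      have e2 := qP_succ q z j
      have e3 := qP_succ' q z j
      rw [e2] at e3 ⊢
      rw [mul_pow, mul_pow]
      rw [pow_add] at e1
      linear_combination (-(1-e) * e^j * z^d * (1-z) * qPoch q (z*q) j) * e1 + ((1-e) * e^j * z^d) * e3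

lemma G_tri (u : ℂ) (hu : ∀ n, qPoch u u n ≠ 0) (m k l : ℕ) :
    G u (m+k+l) m * G u (k+l) k = G u (m+k+l) k * G u (m+l) m := by
  have h1 := G_closed u m (k+l)
  have h2 := G_closed u k l
  have h3 := G_closed u k (m+l)
  have h4 := G_closed u m l
  rw [← add_assoc] at h1
  rw [show k+(m+l) = m+k+l by ring] at h3
  have := mul_ne_zero (mul_ne_zero (hu m) (hu k)) (hu l)
  apply mul_right_cancel₀ this
  trans qPoch u u (m+k+l)
  · rw [← h1, ← h2]; ring
  · rw [← h3, ← h4]; ring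

lemma G_tri2 (u : ℂ) (hu : ∀ n, qPoch u u n ≠ 0) (k j l : ℕ) :
    G u (k+j+l) k * G u (j+l) j = G u (k+j+l) (k+j) * G u (k+j) k := by
  have h1 := G_closed u k (j+l)
  have h2 := G_closed u j l
  have h3 := G_closed u (k+j) l
  have h4 := G_closed u k j
  rw [← add_assoc] at h1
  have := mul_ne_zero (mul_ne_zero (hu j) (hu k)) (hu l)
  apply mul_right_cancel₀ this
  trans qPoch u u (k+j+l)
  · rw [← h1, ← h2]; ring
  · rw [← h3, ← h4]; ring

lemma lemB {q p : ℂ} (h : q * p = 1) (hu : ∀ n, qPoch q q n ≠ 0) (r : ℕ) (e z : ℂ) (w : ℕ → ℂ) :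
    ∑ m ∈ range (r+1), G q r m * ((-1)^m * q^(tr m + m) * p^(r*m) * qPoch q e m * qPoch q z m) *
      ∑ k ∈ range (r+1-m), G q (r-m) k * qPoch q (z*q^m) k * (e*q^m*p^(r+1))^k * w k
    = ∑ s ∈ range (r+1), G q r s * (qPoch q z s * e^s * z^(r-s)) *
        ∑ k ∈ range (s+1), G q s k * p^((s+1)*k) * w k := by
  simp only [Finset.mul_sum]
  rw [Finset.sum_comm' (t' := range (r+1)) (s' := fun k => range (r+1-k)) (by
    intro x y; simp only [Finset.mem_range]; omega)]
  trans ∑ k ∈ range (r+1), G q r k * qPoch q z k * (e * p^(r+1))^k * w k *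
      ∑ m ∈ range (r-k+1), G q (r-k) m * ((-1)^m * q^(tr m + m) * p^((r-k)*m) * qPoch q e m * qPoch q (z*q^k) m)
  · apply Finset.sum_congr rfl
    intro k hk
    have hk' : k ≤ r := by simp at hk; omega
    rw [Finset.mul_sum, show r+1-k = r-k+1 by omega]
    apply Finset.sum_congr rfl
    intro m hm
    obtain ⟨l, rfl⟩ : ∃ l, r = m + k + l := ⟨r - k - m, by simp at hm; omega⟩
    rw [show m+k+l-m = k+l by omega, show m+k+l-k = m+l by omega]
    have g := G_tri q hu m k l
    have a1 := qP_add q z m k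
    have a2 := qP_add q z k m
    rw [add_comm k m, a1] at a2
    have e1 := pq_pow h (m*k)
    have e2 : p^((m+k+l)*m) = p^((m+l)*m) * p^(m*k) := by rw [← pow_add]; congr 1; ring
    have e3 : (e*q^m*p^(m+k+l+1))^k = (e*p^(m+k+l+1))^k * q^(m*k) := by rw [pow_mul, ← mul_pow]; ring
    rw [e2, e3]
    linear_combination ((-1)^m * q^(tr m + m) * p^((m+l)*m) * p^(m*k) * qPoch q e m * qPoch q z m * qPoch q (z*q^m) k * (e*p^(m+k+l+1))^k * q^(m*k) * w k) * g +
      (G q (m + k + l) k * G q (m + l) m * (-1)^m * q^(tr m + m) * p^((m+l)*m) * p^(m*k) * qPoch q e m * (e*p^(m+k+l+1))^k * q^(m*k) * w k) * a2 +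
      (G q (m + k + l) k * G q (m + l) m * (-1)^m * q^(tr m + m) * p^((m+l)*m) * qPoch q e m * (e*p^(m+k+l+1))^k * w k * (qPoch q z k * qPoch q (z*q^k) m)) * e1
  · have hd := Finset.sum_range_diag_flip (r+1) (fun k j => G q r k * qPoch q z k * (e * p^(r+1))^k * w k * (G q (r-k) j * (qPoch q (z*q^k) j * e^j * (z*q^k)^(r-k-j))))
    trans ∑ m ∈ range (r+1), ∑ j ∈ range (r+1-m), G q r m * qPoch q z m * (e * p^(r+1))^m * w m * (G q (r-m) j * (qPoch q (z*q^m) j * e^j * (z*q^m)^(r-m-j)))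
    · apply Finset.sum_congr rfl
      intro k hk
      have hk' : k ≤ r := by simp at hk; omega
      rw [star h, Finset.mul_sum, show r+1-k = r-k+1 by omega]
    · rw [← hd]
      apply Finset.sum_congr rfl
      intro s hs
      apply Finset.sum_congr rfl
      intro k hk
      obtain ⟨j, rfl⟩ : ∃ j, s = k + j := ⟨s-k, by simp at hk; omega⟩
      obtain ⟨l, rfl⟩ : ∃ l, r = k + j + l := ⟨r-(k+j), by simp at hs; omega⟩
      rw [show k+j-k = j by omega, show k+j+l-k = j+l by omega, show j+l-j = l by omega, show k+j+l-(k+j) = l by omega]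
      have g := G_tri2 q hu k j l
      have a1 := qP_add q z k j
      have e1 := pq_pow h (l*k)
      have e2 : (e*p^(k+j+l+1))^k = e^k * p^((k+j+1)*k) * p^(l*k) := by
        rw [mul_pow, ← pow_mul, mul_assoc, ← pow_add]; congr 2; ring
      have e3 : (z*q^k)^l = z^l * q^(l*k) := by rw [mul_pow, ← pow_mul, mul_comm k l]
      rw [e2, e3, a1, pow_add e]
      linear_combination (qPoch q z k * e^k * p^((k+j+1)*k) * p^(l*k) * w k * (qPoch q (z*q^k) j * e^j * (z^l * q^(l*k)))) * g +
       (G q (k+j+l) (k+j) * G q (k+j) k * qPoch q z k * e^k * p^((k+j+1)*k) * w k * qPoch q (z*q^k) j * e^j * z^l) * e1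


lemma V3 (u : ℂ) (n : ℕ) (X : ℂ) :
    ∑ i ∈ range (n+1), G u n i * (u^(i*i) * X^i * qPoch u (X*u^(i+1)) (n-i)) = 1 := by
  induction n generalizing X with
  | zero => simp [qP_zero, G_zero]
  | succ n ih =>
    rw [GS, ← ih (X*u)]
    apply Finset.sum_congr rfl
    intro i hi
    obtain ⟨d, rfl⟩ : ∃ d, n = i + d := ⟨n - i, by simp at hi; omega⟩
    rw [show i+d+1-i = d+1 by omega, show i+d+1-(i+1) = d by omega, show i+d-i = d by omega, qP_succ']
    rw [show X*u*u^(i+1) = X*u^(i+1)*u by ring, show X*u^(i+1+1) = X*u^(i+1)*u by ring]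
    congr 1
    rw [mul_pow]
    ring

lemma Dl {u v : ℂ} (h : u * v = 1) (n : ℕ) (X : ℂ) :
    ∑ j ∈ range (n+1), G u n j * ((-1)^j * u^(tr j) * v^(n*j) * qPoch u (X*u^j) n)
      = (-1)^n * v^(tr (n+1)) * qPoch u u n := by
  induction n generalizing X with
  | zero => simp [qP_zero, G_zero, tr]
  | succ n ih =>
    rw [GS, tr, qP_succ]
    trans (1 - v^(n+1)) * ((-1)^n * v^(tr (n+1)) * qPoch u u n)
    · rw [← ih (X*u), Finset.mul_sum]
      apply Finset.sum_congr rfl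
      intro j _
      rw [mul_left_comm _ (G u n j)]
      congr 1
      have e1 := pq_pow h j
      have e2 : v^((n+1)*(j+1)) = v^(n*j) * v^j * v^(n+1) := by
        rw [← pow_add, ← pow_add]; congr 1; ring
      have e3 : v^((n+1)*j) = v^(n*j) * v^j := by rw [← pow_add]; congr 1; ring
      have e4 := pq_pow h (n+1)
      rw [e2, e3, tr, pow_add u (tr j) j, qP_succ' u (X*u^j) n, qP_succ u (X*u^(j+1)) n]
      rw [show X*u^(j+1) = X*u^j*u by ring, show X*u*u^j = X*u^j*u by ring]
      rw [pow_succ (-1 : ℂ)]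
      set Y := qPoch u (X*u^j*u) n
      linear_combination ((-1)^j * u^(tr j) * v^(n*j) * Y * (1 - X*u^j) - (-1)^j * u^(tr j) * v^(n*j) * v^(n+1) * Y * (1 - X*u^j*u*u^n)) * e1 + (-1)^j * u^(tr j) * v^(n*j) * Y * X * u^j * e4
    · have e4 := pq_pow h (n+1)
      rw [pow_add v, pow_succ (-1 : ℂ)]
      linear_combination (-(-1)^n * v^(tr (n+1)) * qPoch u u n ) * e4

noncomputable def cc (u : ℂ) (t ρ : ℕ) : ℂ := (-1)^ρ * u^(t*(ρ*ρ+ρ) + tr ρ) * (1 - u^(2*ρ+1))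

noncomputable def W (u : ℂ) (t s : ℕ) : ℂ :=
  ∑ ρ ∈ range (s+1), cc u t ρ * (qPoch u u s / (qPoch u u (s-ρ) * qPoch u u (s+ρ+1)))

lemma bailey (u : ℂ) (hu : ∀ n, qPoch u u n ≠ 0) (t s : ℕ) :
    ∑ k ∈ range (s+1), G u s k * u^(k*k+k) * W u t k = W u (t+1) s := by
  have hd := Finset.sum_range_diag_flip (s+1) (fun ρ j => G u s (ρ+j) * u^((ρ+j)*(ρ+j)+(ρ+j)) *
    (cc u t ρ * (qPoch u u (ρ+j) / (qPoch u u j * qPoch u u (ρ+j+ρ+1)))))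
  trans ∑ m ∈ range (s+1), ∑ k ∈ range (m+1), G u s (k+(m-k)) * u^((k+(m-k))*(k+(m-k))+(k+(m-k))) *
    (cc u t k * (qPoch u u (k+(m-k)) / (qPoch u u (m-k) * qPoch u u (k+(m-k)+k+1))))
  · apply Finset.sum_congr rfl
    intro m _
    rw [W, Finset.mul_sum]
    apply Finset.sum_congr rfl
    intro k hk
    rw [show k+(m-k) = m by simp at hk; omega]
  · rw [hd, W]
    apply Finset.sum_congr rfl
    intro ρ hρ
    obtain ⟨n, rfl⟩ : ∃ n, s = ρ + n := ⟨s - ρ, by simp at hρ; omega⟩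
    rw [show ρ+n+1-ρ = n+1 by omega, show ρ+n-ρ = n by omega]
    have hV := V3 u n (u^(2*ρ+1))
    rw [← mul_one (cc u (t+1) ρ * _), ← hV, Finset.mul_sum]
    apply Finset.sum_congr rfl
    intro j hj
    obtain ⟨l, rfl⟩ : ∃ l, n = j + l := ⟨n - j, by simp at hj; omega⟩
    rw [show j+l-j = l by omega]
    have g1 := G_closed u (ρ+j) l
    have g2 := G_closed u j l
    have a1 := qP_add u u (2*ρ+1+j) l
    rw [show u*u^(2*ρ+1+j) = u^(2*ρ+1)*u^(j+1) by ring] at a1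
    rw [show ρ+(j+l) = ρ+j+l by ring, show ρ+j+l+ρ+1 = 2*ρ+1+j+l by ring, show ρ+j+ρ+1 = 2*ρ+1+j by ring]
    rw [a1, ← g1, ← g2]
    have n1 := hu j
    have n2 := hu l
    have n3 := hu (2*ρ+1+j)
    have n4 := hu (ρ+j)
    have n5 : G u (j+l) j ≠ 0 := by
      intro h0; rw [h0] at g2; apply hu (j+l); rw [← g2]; ring
    have n6 : qPoch u (u^(2*ρ+1)*u^(j+1)) l ≠ 0 := by
      intro h0; rw [h0] at a1; apply hu (2*ρ+1+j+l); rw [a1]; ring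
    have ec : cc u (t+1) ρ = cc u t ρ * u^(ρ*ρ+ρ) := by
      unfold cc; rw [show (t+1)*(ρ*ρ+ρ)+tr ρ = t*(ρ*ρ+ρ)+tr ρ + (ρ*ρ+ρ) by ring, pow_add u _ (ρ*ρ+ρ)]; ring
    have eu : u^((ρ+j)*(ρ+j)+(ρ+j)) = u^(ρ*ρ+ρ) * u^(j*j) * (u^(2*ρ+1))^j := by
      rw [← pow_mul, ← pow_add, ← pow_add]; congr 1; ring
    rw [ec, eu]
    field_simp

lemma W_zero (u : ℂ) (hu : ∀ n, qPoch u u n ≠ 0) (s : ℕ) : W u 0 s = if s = 0 then 1 else 0 := by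
  have hne : ∀ n, 1 - u*u^n ≠ 0 := by
    intro n h0; apply hu (n+1); rw [qP_succ, h0, mul_zero]
  split_ifs with hs
  · subst hs
    have := hne 0
    simp [W, cc, tr, qP_zero, qP_succ] at this ⊢
    exact mul_inv_cancel₀ this
  · obtain ⟨s, rfl⟩ : ∃ l, s = l+1 := ⟨s-1, by omega⟩
    have key : ∀ R, R ≤ s+1 → ∑ ρ ∈ range R, cc u 0 ρ * (qPoch u u (s+1) / (qPoch u u (s+1-ρ) * qPoch u u (s+1+ρ+1)))
        = - (-1)^R * u^(tr R) * (1-u^R) * qPoch u u s / (qPoch u u (s+1-R) * qPoch u u (s+1+R)) := by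
      intro R
      induction R with
      | zero => intro _; simp
      | succ R ih =>
        intro hR
        rw [Finset.sum_range_succ, ih (by omega)]
        obtain ⟨d, rfl⟩ : ∃ d, s = R + d := ⟨s-R, by omega⟩
        rw [show R+d+1-R = d+1 by omega, show R+d+1-(R+1) = d by omega, show R+d+1+R+1 = (2*R+d+1)+1 by ring, show R+d+1+(R+1) = (2*R+d+1)+1 by ring, show R+d+1+R = 2*R+d+1 by ring]
        rw [qP_succ u u (2*R+d+1), qP_succ u u d, qP_succ u u (R+d), cc, tr]
        have n1 := hu d
        have n2 := hu (2*R+d+1)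
        have n3 := hu (R+d)
        have n4 := hne d
        have n5 := hne (2*R+d+1)
        have n6 := hne (R+d)
        field_simp
        simp only [zero_mul, zero_add]
        ring
    rw [W, Finset.sum_range_succ, key (s+1) le_rfl]
    simp only [show s+1-(s+1) = 0 by omega, qP_zero, one_mul]
    rw [cc, qP_succ u u (s+1+(s+1)), qP_succ u u s]
    have n1 := hu (s+1+(s+1))
    have n2 := hne (s+1+(s+1))
    have : (1 - u^(2*(s+1)+1)) = (1 - u * u^(s+1+(s+1))) := by ring
    rw [this]
    field_simp
    simp only [zero_mul, zero_add]
    ring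

lemma Jl {u v : ℂ} (h : u * v = 1) (hu : ∀ n, qPoch u u n ≠ 0) (t r : ℕ) :
    (1 - u^(r+1)) * ∑ s ∈ range (r+1), G u r s * ((-1)^s * u^(tr (s+1)) * v^((r+1)*s) * qPoch u (u^(r+2)) s) * W u t s
     = ∑ ρ ∈ range (r+1), cc u t ρ * ((-1)^r * u^(tr (ρ+1)) * v^((r+1)*ρ) * v^(tr (r-ρ+1))) := by
  have hd := Finset.sum_range_diag_flip (r+1) (fun ρ j => G u r (ρ+j) * ((-1)^(ρ+j) * u^(tr (ρ+j+1)) * v^((r+1)*(ρ+j)) * qPoch u (u^(r+2)) (ρ+j)) *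
    (cc u t ρ * (qPoch u u (ρ+j) / (qPoch u u j * qPoch u u (ρ+j+ρ+1)))))
  trans (1 - u^(r+1)) * ∑ m ∈ range (r+1), ∑ k ∈ range (m+1), G u r (k+(m-k)) * ((-1)^(k+(m-k)) * u^(tr (k+(m-k)+1)) * v^((r+1)*(k+(m-k))) * qPoch u (u^(r+2)) (k+(m-k))) *
    (cc u t k * (qPoch u u (k+(m-k)) / (qPoch u u (m-k) * qPoch u u (k+(m-k)+k+1))))
  · congr 1
    apply Finset.sum_congr rfl
    intro m _
    rw [W, Finset.mul_sum]
    apply Finset.sum_congr rfl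
    intro k hk
    rw [show k+(m-k) = m by simp at hk; omega]
  · rw [hd, Finset.mul_sum]
    apply Finset.sum_congr rfl
    intro ρ hρ
    obtain ⟨n, rfl⟩ : ∃ n, r = ρ + n := ⟨r - ρ, by simp at hρ; omega⟩
    rw [show ρ+n+1-ρ = n+1 by omega, show ρ+n-ρ = n by omega]
    have hD := Dl h n (u^(2*ρ+2))
    trans cc u t ρ * ((-1)^ρ * u^(tr (ρ+1)) * v^((ρ+n+1)*ρ) / qPoch u u n) * ((-1)^n * v^(tr (n+1)) * qPoch u u n)
    · rw [← hD, Finset.mul_sum, Finset.mul_sum]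
      apply Finset.sum_congr rfl
      intro j hj
      obtain ⟨l, rfl⟩ : ∃ l, n = j + l := ⟨n - j, by simp at hj; omega⟩
      have g1 := G_closed u (ρ+j) l
      have g2 := G_closed u j l
      have a1 := qP_add u u (2*ρ+1+j) (j+l)
      have a2 := qP_add u u (ρ+(j+l)+1) (ρ+j)
      have a3 := qP_succ u u (ρ+j+l)
      rw [show u*u^(2*ρ+1+j) = u^(2*ρ+2)*u^j by ring] at a1
      rw [show u*u^(ρ+(j+l)+1) = u^(ρ+(j+l)+2) by ring, show ρ+(j+l)+1+(ρ+j) = 2*ρ+1+j+(j+l) by ring, a1] at a2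
      rw [show ρ+(j+l)+1 = ρ+j+l+1 by ring, a3, ← g1] at a2
      have hne : 1 - u^(ρ+(j+l)+1) = 1 - u*u^(ρ+j+l) := by ring
      have n1 := hu j
      have n2 := hu l
      have n3 := hu (2*ρ+1+j)
      have n4 := hu (ρ+j)
      have n5 : G u (j+l) j ≠ 0 := by
        intro h0; rw [h0] at g2; apply hu (j+l); rw [← g2]; ring
      have e1 : v^((ρ+(j+l)+1)*(ρ+j)) = v^((ρ+(j+l)+1)*ρ) * v^((j+l)*j) * v^((ρ+1)*j) := by
        rw [← pow_add, ← pow_add]; congr 1; ring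
      have e2 : u^(tr (ρ+j+1)) = u^(tr (ρ+1)) * u^(tr j) * u^((ρ+1)*j) := by
        rw [← pow_add, ← pow_add]; congr 1; rw [show ρ+j+1 = (ρ+1)+j by ring, tr_add]
      have e3 := pq_pow h ((ρ+1)*j)
      rw [hne, e1, e2, ← g2, show ρ+j+ρ+1 = 2*ρ+1+j by ring, show ρ + (j+l) = ρ+j+l by ring] at *
      field_simp
      rw [pow_add (-1:ℂ)]
      linear_combination (-(-1)^ρ * (-1)^j * u^(tr (ρ+1)) * u^(tr j) * v^((ρ+j+l+1)*ρ) * v^((j+l)*j) * cc u t ρ * (u^((ρ+1)*j) * v^((ρ+1)*j))) * a2 + (-1)^ρ * (-1)^j * u^(tr (ρ+1)) * u^(tr j) * v^((ρ+j+l+1)*ρ) * v^((j+l)*j) * cc u t ρ * qPoch u u (2*ρ+1+j) * qPoch u (u^(2*ρ+2)*u^j) (j+l) * e3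
    · have := hu n
      field_simp
      ring

lemma convP {q p : ℂ} (h : q * p = 1) (a n : ℕ) :
    qPoch q (q^a) n = (-1)^n * q^(a*n + tr n) * qPoch p (p^a) n := by
  induction n with
  | zero => simp [qP_zero, tr]
  | succ n ih =>
    rw [qP_succ, qP_succ, ih, tr]
    have e := pq_pow h (a+n)
    rw [show a*(n+1) + (tr n + n) = (a*n + tr n) + (a+n) by ring, pow_add q _ (a+n), pow_succ (-1:ℂ)]
    rw [show p^a*p^n = p^(a+n) by ring, show q^a*q^n = q^(a+n) by ring]
    linear_combination (-(-1)^n * q^(a*n + tr n) * qPoch p (p^a) n) * e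

lemma pow_ne {q p : ℂ} (h : q * p = 1) (n : ℕ) : q^n ≠ 0 := by
  intro h0; have := pq_pow h n; rw [h0] at this; simp at this

lemma huP {q p : ℂ} (h : q * p = 1) (hu : ∀ n, qPoch q q n ≠ 0) (n : ℕ) : qPoch p p n ≠ 0 := by
  intro h0
  have := convP h 1 n
  rw [pow_one, pow_one, h0, mul_zero] at this
  exact hu n this

lemma Gconv {q p : ℂ} (h : q * p = 1) (hu : ∀ n, qPoch q q n ≠ 0) (i j : ℕ) :
    G q (i+j) i = q^(i*j) * G p (i+j) i := by
  have g1 := G_closed q i j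
  have g2 := G_closed p i j
  have c := convP h 1
  simp only [pow_one, one_mul] at c
  have n1 := huP h hu i
  have n2 := huP h hu j
  rw [c i, c j, c (i+j), ← g2, tr_add] at g1
  have hx : (-1:ℂ)^i * q^(i+tr i) * ((-1)^j * q^(j+tr j)) * (qPoch p p i * qPoch p p j) ≠ 0 := by
    have := pow_ne h (i+tr i)
    have := pow_ne h (j+tr j)
    simp_all
  apply mul_right_cancel₀ hx
  rw [show i+j+(tr i+tr j+i*j) = (i+tr i)+(j+tr j)+i*j by ring, pow_add q _ (i*j), pow_add q (i+tr i)] at g1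
  rw [pow_add (-1:ℂ)] at g1
  linear_combination g1

lemma Wstep {q p : ℂ} (h : q * p = 1) (hu : ∀ n, qPoch q q n ≠ 0) (t s : ℕ) :
    ∑ k ∈ range (s+1), G q s k * p^((s+1)*k) * W p t k = W p (t+1) s := by
  rw [← bailey p (huP h hu)]
  apply Finset.sum_congr rfl
  intro k hk
  obtain ⟨l, rfl⟩ : ∃ l, s = k + l := ⟨s - k, by simp at hk; omega⟩
  rw [Gconv h hu, show (k+l+1)*k = k*l + (k*k+k) by ring, pow_add p]
  linear_combination (G p (k+l) k * p^(k*k+k) * W p t k) * pq_pow h (k*l)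

lemma negP0 {q p : ℂ} (h : q * p = 1) (i j : ℕ) :
    qPoch q (p^(i+j)) i * qPoch q q j = (-1)^i * q^(tr i) * p^((i+j)*i) * qPoch q q (i+j) := by
  induction i generalizing j with
  | zero => simp [qP_zero, tr]
  | succ i ih =>
    have := ih (j+1)
    rw [qP_succ q q j] at this
    rw [show i+1+j = i+(j+1) by ring, qP_succ, tr, pow_succ (-1:ℂ), pow_add q,
      show (i+(j+1))*(i+1) = (i+(j+1))*i + i + (j+1) by ring, pow_add p ((i+(j+1))*i + i) (j+1), pow_add p ((i+(j+1))*i) i]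
    have e1 := pq_pow h i
    have e2 := pq_pow h (j+1)
    have e3 : p^(i+(j+1)) * q^i = p^(j+1) := by
      rw [pow_add]; linear_combination p^(j+1) * e1
    rw [e3]
    linear_combination (-p^(j+1)) * this + ((-1)^i * q^(tr i) * p^((i+(j+1))*i) * qPoch q q (i+(j+1)) * p^(j+1)) * e1 - (qPoch q (p^(i+(j+1))) i * qPoch q q j) * e2

lemma negP {q p : ℂ} (h : q * p = 1) (hu : ∀ n, qPoch q q n ≠ 0) (i j : ℕ) :
    qPoch q (p^(i+j)) i / qPoch q q i = (-1)^i * q^(tr i) * p^((i+j)*i) * G q (i+j) i := by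
  have a := negP0 h i j
  have b := G_closed q i j
  have n1 := hu i
  have n2 := hu j
  rw [div_eq_iff n1]
  apply mul_right_cancel₀ n2
  rw [a, ← b]; ring

noncomputable def Hs (q p : ℂ) (t : ℕ) (x z : ℂ) (R : ℕ) : ℂ :=
  ∑ s ∈ range (R+1), G q R s * qPoch q z s * x^s * W p t s

lemma key {q p : ℂ} (h : q * p = 1) (hu : ∀ n, qPoch q q n ≠ 0) (t R : ℕ) (e z zi : ℂ) (hz : z * zi = 1) :
    ∑ μ ∈ range (R+1), qPoch q e μ / qPoch q q μ * (qPoch q z μ * qPoch q (p^R) μ * q^μ) *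
      Hs q p t (e*q^μ*p^(R+1)) (z*q^μ) (R-μ) = z^R * Hs q p (t+1) (e*zi) z R := by
  have L := lemB h hu R e z (W p t)
  have e1 : ∑ μ ∈ range (R+1), qPoch q e μ / qPoch q q μ * (qPoch q z μ * qPoch q (p^R) μ * q^μ) *
      Hs q p t (e*q^μ*p^(R+1)) (z*q^μ) (R-μ) = ∑ m∈range (R+1), G q R m*((-1)^m*q^(tr m+m)*p^(R*m)*qPoch q e m*qPoch q z m) * ∑ k∈range (R+1-m), G q (R-m) k*qPoch q (z*q^m) k*(e*q^m*p^(R+1))^k*W p t k := by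
    apply Finset.sum_congr rfl
    intro m hm
    obtain ⟨l, rfl⟩ : ∃ l, R = m + l := ⟨R - m, by simp at hm; omega⟩
    rw [Hs, show m+l-m = l by omega, show m+l+1-m = l+1 by omega]
    congr 1
    have := negP h hu m l
    rw [pow_add q]
    linear_combination (qPoch q e m * qPoch q z m * q^m) * this
  rw [e1, L, Hs, Finset.mul_sum]
  apply Finset.sum_congr rfl
  intro s hs
  rw [Wstep h hu]
  obtain ⟨l, rfl⟩ : ∃ l, R = s + l := ⟨R - s, by simp at hs; omega⟩
  rw [show s+l-s = l by omega, mul_pow, pow_add z]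
  linear_combination (-G q (s+l) s * qPoch q z s * e^s * z^l * W p (t+1) s) * pq_pow hz s

noncomputable def c (q p : ℂ) (r m : ℕ) : ℂ := qPoch q (q^(r+2)) m * qPoch q (p^r) m * q^(m+1)

lemma c_add {q p : ℂ} (h : q * p = 1) (m R μ : ℕ) :
    c q p (m+R) (m+μ) = c q p (m+R) m * (qPoch q (q^(m+R+2+m)) μ * qPoch q (p^R) μ * q^μ) := by
  unfold c
  have : p^(m+R) * q^m = p^R := by
    rw [pow_add]; linear_combination p^R * pq_pow h m
  rw [qP_add, qP_add, this, ← pow_add q]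
  ring

noncomputable def V (q p : ℂ) (r : ℕ) : ℕ → ℕ → ℕ → ℂ
  | 0, _, m => c q p r m
  | t+1, A, m => q^((m+1)^2) * ∑ m' ∈ range (r+1), qBinom q ((m':ℤ)+m+A) ((m':ℤ)-m) * V q p r t (A+2*m+1) m'

lemma qB {q : ℂ} (a μ : ℕ) :
    qBinom q ((a:ℤ)+μ) μ = qPoch q (q^(a+1)) μ / qPoch q q μ := by
  unfold qBinom qPoch
  rw [if_pos ⟨by omega, by omega⟩, Int.toNat_natCast, Finset.prod_div_distrib]
  congr 1
  · apply Finset.prod_congr rfl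
    intro j _
    rw [show (a:ℤ)+μ-μ+j+1 = ((a+1+j:ℕ):ℤ) by push_cast; ring, zpow_natCast, pow_add]
  · apply Finset.prod_congr rfl
    intro j _
    rw [show (j:ℤ)+1 = ((1+j:ℕ):ℤ) by push_cast; ring, zpow_natCast, pow_add, pow_one]

lemma V_eq {q p : ℂ} (h : q * p = 1) (hu : ∀ n, qPoch q q n ≠ 0) (t m R A : ℕ) :
    V q p (m+R) t A m = c q p (m+R) m * q^(t*(m+R+1)^2) *
      Hs q p t (q^(A+m)*p^(m+R+1)) (q^(m+R+2+m)) R := by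
  induction t generalizing m R A with
  | zero =>
    rw [V, Hs, Finset.sum_eq_single 0]
    · simp [G_zero, qP_zero, W_zero p (huP h hu)]
    · intro s _ hs
      rw [W_zero p (huP h hu), if_neg hs, mul_zero]
    · simp
  | succ t ih =>
    rw [V, show m+R+1 = m+(R+1) by ring, Finset.sum_range_add]
    rw [Finset.sum_eq_zero, zero_add]
    swap
    · intro x hx
      rw [qBinom, if_neg, zero_mul]
      simp at hx; omega
    have K := key h hu t R (q^(A+2*m+1)) (q^(m+R+2+m)) (p^(m+R+2+m)) (pq_pow h _)
    have e0 : q^(A+2*m+1) * p^(m+R+2+m) = q^(A+m)*p^(m+(R+1)) := by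
      rw [show A+2*m+1 = A+m+(m+1) by ring, show m+R+2+m = m+(R+1)+(m+1) by ring, pow_add q _ (m+1), pow_add p _ (m+1)]
      linear_combination (q^(A+m)*p^(m+(R+1))) * pq_pow h (m+1)
    rw [e0] at K
    have e2 : q^((t+1)*(m+(R+1))^2) = q^((m+1)^2) * q^(t*(m+(R+1))^2) * (q^(m+R+2+m))^R := by
      rw [← pow_mul, ← pow_add, ← pow_add]; congr 1; ring
    rw [e2]
    have e3 : ∀ X : ℂ, c q p (m+R) m * (q^((m+1)^2) * q^(t*(m+(R+1))^2) * (q^(m+R+2+m))^R) * X = q^((m+1)^2) * (c q p (m+R) m * q^(t*(m+(R+1))^2) * ((q^(m+R+2+m))^R * X)) := by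
      intro X; ring
    rw [e3, ← K]
    congr 1
    rw [Finset.mul_sum]
    apply Finset.sum_congr rfl
    intro μ hμ
    have hI := ih (m+μ) (R-μ) (A+2*m+1)
    have hR : m+μ+(R-μ) = m+R := by simp at hμ; omega
    rw [hR] at hI
    rw [hI, c_add h, show (((m+μ:ℕ):ℤ)+m+A) = ((2*m+A:ℕ):ℤ)+μ by push_cast; ring, show (((m+μ:ℕ):ℤ)-m) = (μ:ℤ) by push_cast; ring, qB]
    have e4 : q^(A+2*m+1+(m+μ))*p^(m+R+1) = q^(A+2*m+1)*q^μ*p^(R+1) := by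
      rw [show A+2*m+1+(m+μ) = A+2*m+1+μ+m by ring, show m+R+1 = R+1+m by ring, pow_add q _ m, pow_add q _ μ, pow_add p _ m]
      linear_combination (q^(A+2*m+1)*q^μ*p^(R+1)) * pq_pow h m
    rw [e4, show m+R+2+(m+μ) = m+R+2+m+μ by ring, pow_add q (m+R+2+m) μ, show 2*m+A+1 = A+2*m+1 by ring, show m+R+1 = m+(R+1) by ring]
    ring

lemma V_sum {q p : ℂ} (h : q * p = 1) (hu : ∀ n, qPoch q q n ≠ 0) (t r : ℕ) :
    ∑ m ∈ range (r+1), V q p r t 1 m = q * q^(t*(r+1)^2) * q^((r+2)*r) *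
      Hs q p (t+1) (p^(r+1)) (q^(r+2)) r := by
  have K := key h hu t r q (q^(r+2)) (p^(r+2)) (pq_pow h _)
  have e0 : q * p^(r+2) = p^(r+1) := by
    rw [pow_succ p (r+1)]; linear_combination p^(r+1) * h
  rw [e0, ← pow_mul] at K
  rw [mul_assoc _ (q^((r+2)*r)), ← K, Finset.mul_sum]
  apply Finset.sum_congr rfl
  intro m hm
  obtain ⟨R, rfl⟩ : ∃ l, r = m + l := ⟨r - m, by simp at hm; omega⟩
  rw [V_eq h hu, div_self (hu m), show m+R-m = R by omega, c]
  rw [pow_add q (m+R+2) m, pow_add q 1 m, pow_one, pow_succ q m]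
  ring

lemma fin1 {q p : ℂ} (h : q * p = 1) (hu : ∀ n, qPoch q q n ≠ 0) (T r : ℕ) :
    (1 - q^(r+1)) * Hs q p T (p^(r+1)) (q^(r+2)) r = - q^(r+1) *
     ∑ ρ ∈ range (r+1), cc p T ρ * ((-1)^r * p^(tr (ρ+1)) * q^((r+1)*ρ) * q^(tr (r-ρ+1))) := by
  rw [← Jl (show p * q = 1 by rw [mul_comm]; exact h) (huP h hu) T r]
  have : Hs q p T (p^(r+1)) (q^(r+2)) r = ∑ s ∈ range (r+1), G p r s * ((-1)^s * p^(tr (s+1)) * q^((r+1)*s) * qPoch p (p^(r+2)) s) * W p T s := by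
    apply Finset.sum_congr rfl
    intro s hs
    congr 1
    obtain ⟨l, rfl⟩ : ∃ l, r = s + l := ⟨r - s, by simp at hs; omega⟩
    rw [Gconv h hu, convP h, ← pow_mul]
    have hs2 : s*s = tr s + tr (s+1) := by
      have := tr_two s
      have h2 : tr (s+1) = tr s + s := rfl
      nlinarith
    have e1 := pq_pow h (tr (s+1))
    have e2 := pq_pow h ((s+l+1)*s)
    have e3 : q^(s*l) * q^((s+l+2)*s+tr s) * q^(tr (s+1)) = q^((s+l+1)*s) * q^((s+l+1)*s) := by
      simp only [← pow_add]; congr 1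
      have h2 : tr (s+1) = tr s + s := rfl
      nlinarith
    have n1 := pow_ne h (tr (s+1))
    apply mul_right_cancel₀ n1
    have e4 : q^(s*l) * q^((s+l+2)*s+tr s) * q^(tr (s+1)) * p^((s+l+1)*s) = q^((s+l+1)*s) := by
      rw [e3]; linear_combination q^((s+l+1)*s) * e2
    linear_combination (G p (s+l) s * (-1)^s * qPoch p (p^(s+l+2)) s) * e4 - (G p (s+l) s * (-1)^s * q^((s+l+1)*s) * qPoch p (p^(s+l+2)) s) * e1
  rw [this]
  linear_combination (- ∑ s ∈ range (r+1), G p r s * ((-1)^s * p^(tr (s+1)) * q^((r+1)*s) * qPoch p (p^(r+2)) s) * W p T s) * pq_pow h (r+1)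

noncomputable def UP (q : ℂ) (A t : ℕ) (K : Fin (t+1) → ℕ) : ℂ :=
  ∏ i : Fin t, (q ^ ((K i.castSucc + 1) ^ 2) *
    qBinom q ((K i.succ : ℤ) + (K i.castSucc : ℤ) + A + (i : ℕ)
        + 2 * ∑ j ∈ Finset.univ.filter (fun j : Fin (t+1) => (j : ℕ) < (i : ℕ)), (K j : ℤ))
      ((K i.succ : ℤ) - (K i.castSucc : ℤ)))

lemma UP_succ (q : ℂ) (A t : ℕ) (K : Fin (t+2) → ℕ) :
    UP q A (t+1) K = q^((K 0 + 1)^2) * qBinom q ((K 1 : ℤ) + K 0 + A) ((K 1 : ℤ) - K 0) *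
      UP q (A + 2 * K 0 + 1) t (fun i => K i.succ) := by
  unfold UP
  rw [Fin.prod_univ_succ]
  congr 1
  · simp
  · apply Finset.prod_congr rfl
    intro i _
    rw [← Fin.succ_castSucc]
    congr 2
    rw [Finset.sum_filter, Finset.sum_filter, Fin.sum_univ_succ]
    simp only [Fin.val_succ, Fin.val_zero, Nat.succ_pos, if_true, Nat.add_lt_add_iff_right]
    push_cast
    ring

lemma UtProd_eq (q : ℂ) (t : ℕ) (K : Fin (t+1) → ℕ) :
    UtProd q t (fun i => K i + 1) = UP q 1 t K := by
  unfold UP UtProd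
  apply Finset.prod_congr rfl
  intro i _
  congr 2
  · push_cast
    rw [Finset.sum_add_distrib, Finset.sum_const, Fin.card_filter_val_lt, min_eq_right (by omega)]
    simp
    ring
  · push_cast
    ring

lemma UP_zero (q : ℂ) (A t : ℕ) (K : Fin (t+1) → ℕ) (i : Fin t) (h : K i.succ < K i.castSucc) :
    UP q A t K = 0 := by
  apply Finset.prod_eq_zero (Finset.mem_univ i)
  rw [qBinom, if_neg, mul_zero]
  omega

lemma sum_cons {N n : ℕ} (f : (Fin (n+1) → Fin N) → ℂ) :
    ∑ K, f K = ∑ m : Fin N, ∑ K : Fin n → Fin N, f (Fin.cons m K) := by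
  rw [← (Fin.consEquiv (fun _ => Fin N)).sum_comp, Fintype.sum_prod_type]
  rfl

lemma S_eq (q p : ℂ) (r t A : ℕ) (m : Fin (r+1)) :
    ∑ K : Fin t → Fin (r+1), c q p r ((Fin.cons m K : Fin (t+1) → Fin (r+1)) (Fin.last t) : ℕ) *
      UP q A t (fun i => ((Fin.cons m K : Fin (t+1) → Fin (r+1)) i : ℕ)) = V q p r t A m := by
  induction t generalizing A m with
  | zero => simp [V, UP]
  | succ t ih =>
    rw [sum_cons, V, ← Fin.sum_univ_eq_sum_range (fun m' => qBinom q ((m':ℤ)+m+A) ((m':ℤ)-m) * V q p r t (A+2*m+1) m'), Finset.mul_sum]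
    apply Finset.sum_congr rfl
    intro m' _
    rw [← ih, Finset.mul_sum, Finset.mul_sum]
    apply Finset.sum_congr rfl
    intro K _
    rw [UP_succ, ← Fin.succ_last]
    simp only [Fin.cons_succ, Fin.cons_zero]
    rw [show (1 : Fin (t+2)) = Fin.succ 0 from rfl]
    simp only [Fin.cons_succ, Fin.cons_zero]
    ring

lemma sum_Icc (N : ℕ) (f : ℤ → ℂ) :
    ∑ k ∈ Finset.Icc (-(N:ℤ)) ((N:ℤ)-1), f k = ∑ ρ ∈ range N, (f ρ + f (-(ρ:ℤ)-1)) := by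
  induction N with
  | zero => simp
  | succ N ih =>
    rw [Finset.sum_range_succ, ← ih]
    have : Finset.Icc (-((N+1:ℕ):ℤ)) (((N+1:ℕ):ℤ)-1) = insert (N:ℤ) (insert (-(N:ℤ)-1) (Finset.Icc (-(N:ℤ)) ((N:ℤ)-1))) := by
      ext x; simp only [Finset.mem_Icc, Finset.mem_insert]; push_cast; omega
    rw [this, Finset.sum_insert, Finset.sum_insert]
    · ring
    · simp
    · simp only [Finset.mem_Icc, Finset.mem_insert]; omega

lemma neg_one_zpow_nat (ρ : ℕ) : (-1:ℂ)^(ρ:ℤ) = (-1)^ρ := zpow_natCast _ _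

lemma neg_one_zpow_neg (ρ : ℕ) : (-1:ℂ)^(-(ρ:ℤ)-1) = -(-1)^ρ := by
  rw [zpow_sub₀ (by norm_num), zpow_neg, zpow_natCast]
  rcases neg_one_pow_eq_or ℂ ρ with h | h <;> rw [h] <;> norm_num

lemma term_eq {q : ℂ} (h0 : q ≠ 0) (t r ρ : ℕ) (hρ : ρ ≤ r) :
    q^(-(t:ℤ)-1) * (q * q^(t*(r+1)^2) * q^((r+2)*r)) * (-q^(r+1) * (cc q⁻¹ (t+1) ρ * ((-1)^r * q⁻¹^(tr (ρ+1)) * q^((r+1)*ρ) * q^(tr (r-ρ+1)))))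
    = (-1:ℂ)^(r+1) * q^(-(t:ℤ)-1 + ((r+1:ℕ):ℤ)*((2*(t:ℤ)+3)*((r+1:ℕ):ℤ)+1)/2) *
      ((-1:ℂ)^(ρ:ℤ) * q^(-(2*(t:ℤ)+3)*ρ*(ρ+1)/2+ρ) + (-1:ℂ)^(-(ρ:ℤ)-1) * q^(-(2*(t:ℤ)+3)*(-(ρ:ℤ)-1)*((-(ρ:ℤ)-1)+1)/2+(-(ρ:ℤ)-1))) := by
  obtain ⟨d, rfl⟩ : ∃ d, r = ρ + d := ⟨r-ρ, by omega⟩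
  rw [show ρ+d-ρ+1 = d+1 by omega, neg_one_zpow_nat, neg_one_zpow_neg, cc]
  have t1 := tr_two ρ
  have t2 := tr_two d
  have t3 := tr_two (ρ+d+1)
  have t4 : tr (ρ+1) = tr ρ + ρ := rfl
  zify at t1 t2 t3 t4
  have d1 : ((ρ+d+1:ℕ):ℤ)*((2*(t:ℤ)+3)*((ρ+d+1:ℕ):ℤ)+1)/2 = (t+1)*((ρ:ℤ)+d+1)^2 + tr (ρ+d+1+1) := by
    apply Int.ediv_eq_of_eq_mul_right (by norm_num)
    push_cast
    linear_combination -t3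
  have d2 : -(2*(t:ℤ)+3)*ρ*(ρ+1)/2 = -(2*t+3)*tr (ρ+1) := by
    apply Int.ediv_eq_of_eq_mul_right (by norm_num)
    linear_combination (2*(t:ℤ)+3) * t1
  have d3 : -(2*(t:ℤ)+3)*(-(ρ:ℤ)-1)*((-(ρ:ℤ)-1)+1)/2 = -(2*t+3)*tr (ρ+1) := by
    apply Int.ediv_eq_of_eq_mul_right (by norm_num)
    linear_combination (2*(t:ℤ)+3) * t1
  rw [d1, d2, d3]
  have hp : ∀ n : ℕ, q⁻¹^n = q^(-(n:ℤ)) := by intro n; rw [zpow_neg, zpow_natCast, inv_pow]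
  simp only [hp]
  have e2 : q^(-(2*t+3)*(tr (ρ+1):ℤ)+(-(ρ:ℤ)-1)) = q^(-(2*t+3)*(tr (ρ+1):ℤ)+ρ) * q^(-((2*ρ+1:ℕ):ℤ)) := by
    rw [← zpow_add₀ h0]; congr 1; push_cast; ring
  rw [e2]
  have E : q^(-(t:ℤ)-1) * (q * q^(t*(ρ+d+1)^2) * q^((ρ+d+2)*(ρ+d))) * q^(ρ+d+1) * q^(-(((t+1)*(ρ*ρ+ρ)+tr ρ:ℕ):ℤ)) * q^(-((tr (ρ+1):ℕ):ℤ)) * q^((ρ+d+1)*ρ) * q^(tr (d+1))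
     = q^(-(t:ℤ)-1+((t+1)*((ρ:ℤ)+d+1)^2 + tr (ρ+d+1+1))) * q^(-(2*t+3)*(tr (ρ+1):ℤ)+ρ) := by
    nth_rewrite 2 [← pow_one q]
    simp only [← zpow_natCast q, ← zpow_add₀ h0]
    congr 1
    push_cast
    have t5 : (tr (ρ+d+1+1) : ℤ) = tr (ρ+1) + tr (d+1) + (ρ+1)*(d+1) := by
      have := tr_add (ρ+1) (d+1)
      rw [show ρ+1+(d+1) = ρ+d+1+1 by ring] at this
      zify at this; exact this
    rw [t5, t4]
    rw [t4] at t1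
    linear_combination (t : ℤ) * t1
  linear_combination (-(-1:ℂ)^ρ * (-1)^(ρ+d) * (1 - q^(-((2*ρ+1:ℕ):ℤ)))) * E

lemma nonvan {q : ℂ} (hq0 : 0 < ‖q‖) (hq1 : ‖q‖ < 1) (n : ℕ) : qPoch q q n ≠ 0 := by
  unfold qPoch
  rw [Finset.prod_ne_zero_iff]
  intro j _ h0
  have : q^(j+1) = 1 := by rw [pow_succ]; linear_combination -h0
  have h1 : ‖q‖^(j+1) = 1 := by rw [← norm_pow, this, norm_one]
  have := pow_lt_one₀ hq0.le hq1 (Nat.succ_ne_zero j)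
  simp only [Nat.succ_eq_add_one] at this
  linarith

end S5

/-- `(1-q^N)·U_t(-q^N;q)` equals the defining expression of the colored
Jones polynomial of the left-handed torus knot `T*_{(2,2t+1)}`; the paper's `t` is
`t+1` here (so `2t+1 = 2t+3`). -/
theorem stmt5 (t N : ℕ) (hN : 1 ≤ N) (q : ℂ)
    (hq0 : 0 < ‖q‖) (hq1 : ‖q‖ < 1) :
    (1 - q ^ N) * q ^ (-(t : ℤ) - 1) *
      ∑ k ∈ Finset.univ.filter
          (fun k : Fin (t+1) → Fin N => ∀ i : Fin t, k i.castSucc ≤ k i.succ),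
        qPoch q (q ^ (1 + (N : ℤ))) ((k (Fin.last t) : ℕ)) *
          qPoch q (q ^ (1 - (N : ℤ))) ((k (Fin.last t) : ℕ)) *
          q ^ ((k (Fin.last t) : ℕ) + 1) *
          UtProd q t (fun i => (k i : ℕ) + 1) =
    (-1 : ℂ) ^ N * q ^ (-(t : ℤ) - 1 + (N : ℤ) * ((2 * (t : ℤ) + 3) * N + 1) / 2) *
      ∑ k ∈ Finset.Icc (-(N : ℤ)) ((N : ℤ) - 1),
        (-1 : ℂ) ^ k * q ^ (-(2 * (t : ℤ) + 3) * k * (k + 1) / 2 + k) := by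
  obtain ⟨r, rfl⟩ : ∃ r, N = r + 1 := ⟨N - 1, by omega⟩
  have h0 : q ≠ 0 := norm_pos_iff.mp hq0
  have h : q * q⁻¹ = 1 := mul_inv_cancel₀ h0
  have hu := S5.nonvan hq0 hq1
  have hsum : ∑ k ∈ Finset.univ.filter
          (fun k : Fin (t+1) → Fin (r+1) => ∀ i : Fin t, k i.castSucc ≤ k i.succ),
        qPoch q (q ^ (1 + ((r+1:ℕ) : ℤ))) ((k (Fin.last t) : ℕ)) *
          qPoch q (q ^ (1 - ((r+1:ℕ) : ℤ))) ((k (Fin.last t) : ℕ)) *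
          q ^ ((k (Fin.last t) : ℕ) + 1) *
          UtProd q t (fun i => (k i : ℕ) + 1) = ∑ m ∈ range (r+1), S5.V q q⁻¹ r t 1 m := by
    rw [← Fin.sum_univ_eq_sum_range]
    simp only [← S5.S_eq]
    rw [← S5.sum_cons (fun K : Fin (t+1) → Fin (r+1) => S5.c q q⁻¹ r (K (Fin.last t)) * S5.UP q 1 t (fun i => (K i : ℕ)))]
    rw [Finset.sum_filter]
    apply Finset.sum_congr rfl
    intro K _
    split_ifs with hK
    · rw [S5.UtProd_eq q t (fun i => (K i : ℕ)), S5.c]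
      rw [show (1 + ((r+1:ℕ):ℤ)) = ((r+2:ℕ):ℤ) by push_cast; ring, zpow_natCast,
        show (1 - ((r+1:ℕ):ℤ)) = -(r:ℤ) by push_cast; ring, zpow_neg, zpow_natCast, inv_pow]
    · push Not at hK
      obtain ⟨i, hi⟩ := hK
      rw [S5.UP_zero q 1 t _ i hi, mul_zero]
  rw [hsum, S5.V_sum h hu, S5.sum_Icc]
  have F := S5.fin1 h hu (t+1) r
  trans q ^ (-(t : ℤ) - 1) * (q * q^(t*(r+1)^2) * q^((r+2)*r)) * ((1 - q^(r+1)) * S5.Hs q q⁻¹ (t+1) (q⁻¹^(r+1)) (q^(r+2)) r)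
  · ring
  rw [F, Finset.mul_sum, Finset.mul_sum, Finset.mul_sum]
  apply Finset.sum_congr rfl
  intro ρ hρ
  exact S5.term_eq h0 t r ρ (by simp at hρ; omega)
end

section
/- Let q ∈ ℂ with 0 < |q| < 1 and let x ∈ ℂ with x ≠ 0. Then (1 - x) · q^{-1} Σ_{k ≥ 1} (xq;q)_{k-1} (q/x;q)_{k-1} q^{k} = (1/(q;q)_∞) · ( Σ_{r ≥ 0, n ≥ 0} - Σ_{r < 0, n < 0} ) (-1)^{n+r} x^{-r} q^{n(3n+5)/2 + 2nr + r(r+3)/2}, where all series converge absolutely. (The left side is (1-x)·U_1(-x;q).) -/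
open Finset

/-- The infinite q-Pochhammer symbol `(a;q)_∞`. -/
noncomputable def qPochInf (q a : ℂ) : ℂ := ∏' j : ℕ, (1 - a * q ^ j)

/-- The Hecke-type summand `(-1)^{n+r} x^{-r} q^{n(3n+5)/2 + 2nr + r(r+3)/2}`,
indexed by the pair `(r, n)`. -/
noncomputable def hTerm (q x : ℂ) (p : ℤ × ℤ) : ℂ :=
  (-1 : ℂ) ^ (p.2 + p.1) * x ^ (-p.1) *
    q ^ (p.2 * (3 * p.2 + 5) / 2 + 2 * p.2 * p.1 + p.1 * (p.1 + 3) / 2)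

section
variable {q : ℂ}

lemma pw_ne {q : ℂ} (hq1 : ‖q‖ < 1) (j : ℕ) : 1 - q * q ^ j ≠ 0 := by
  intro h
  have h1 : q ^ (j+1) = 1 := by rw [pow_succ']; linear_combination -h
  have h2 : ‖q‖ ^ (j+1) = 1 := by rw [← norm_pow, h1, norm_one]
  have h3 : ‖q‖ ^ (j+1) < 1 := pow_lt_one₀ (norm_nonneg _) hq1 (by omega)
  linarith

lemma qP_succ (q a : ℂ) (n : ℕ) : qPoch q a (n+1) = qPoch q a n * (1 - a * q ^ n) := by
  simp [qPoch, Finset.prod_range_succ]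

lemma qP_ne (hq1 : ‖q‖ < 1) (n : ℕ) : qPoch q q n ≠ 0 :=
  Finset.prod_ne_zero_iff.mpr fun j _ => pw_ne hq1 j

lemma summ_pw (hq1 : ‖q‖ < 1) (a : ℂ) : Summable (fun j : ℕ => ‖-(a * q ^ j)‖) := by
  simp only [norm_neg, norm_mul, norm_pow]
  exact (summable_geometric_of_lt_one (norm_nonneg _) hq1).mul_left _

lemma qP_tendsto (hq1 : ‖q‖ < 1) (a : ℂ) :
    Filter.Tendsto (qPoch q a) Filter.atTop (nhds (qPochInf q a)) := by
  have := (multipliable_one_add_of_summable (summ_pw hq1 a)).hasProd.tendsto_prod_nat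
  simp only [← sub_eq_add_neg] at this
  exact this

lemma qPI_ne (hq1 : ‖q‖ < 1) : qPochInf q q ≠ 0 := by
  have := tprod_one_add_ne_zero_of_summable (f := fun j : ℕ => -(q * q ^ j))
    (fun j => by simpa [sub_eq_add_neg] using pw_ne hq1 j) (summ_pw hq1 q)
  simpa [qPochInf, sub_eq_add_neg] using this

/-- inverse Pochhammer on integers -/
noncomputable def ip (q : ℂ) (n : ℤ) : ℂ := if 0 ≤ n then (qPoch q q n.toNat)⁻¹ else 0

lemma ip_nat (n : ℕ) : ip q (n : ℤ) = (qPoch q q n)⁻¹ := by simp [ip]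

lemma ip_step (hq1 : ‖q‖ < 1) (n : ℤ) : ip q n = (1 - q ^ (n+1)) * ip q (n+1) := by
  rcases lt_trichotomy n (-1) with h | h | h
  · simp [ip, show ¬ (0 ≤ n) by omega, show ¬ (0 ≤ n + 1) by omega]
  · subst h; simp [ip]
  · obtain ⟨m, rfl⟩ := Int.eq_ofNat_of_zero_le (show 0 ≤ n by omega)
    have h1 : ((m : ℤ) + 1) = ((m + 1 : ℕ) : ℤ) := by push_cast; rfl
    rw [h1, ip_nat, ip_nat, qP_succ, zpow_natCast, pow_succ']
    have := qP_ne hq1 m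
    have := pw_ne hq1 m
    field_simp

lemma bdd (hq1 : ‖q‖ < 1) (a : ℂ) : ∃ M : ℝ, 0 ≤ M ∧ ∀ n, ‖qPoch q a n‖ ≤ M := by
  obtain ⟨M, hM⟩ := (qP_tendsto hq1 a).norm.bddAbove_range
  exact ⟨M, (norm_nonneg _).trans (hM ⟨0, rfl⟩), fun n => hM ⟨n, rfl⟩⟩

lemma bdd_ip (hq1 : ‖q‖ < 1) : ∃ M : ℝ, 0 ≤ M ∧ ∀ n, ‖ip q n‖ ≤ M := by
  obtain ⟨M, hM⟩ := ((qP_tendsto hq1 q).inv₀ (qPI_ne hq1)).norm.bddAbove_range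
  have h0 : 0 ≤ M := (norm_nonneg _).trans (hM ⟨0, rfl⟩)
  refine ⟨M, h0, fun n => ?_⟩
  unfold ip
  split_ifs
  · exact hM ⟨n.toNat, rfl⟩
  · simpa using h0

/-- summand of A -/
noncomputable def gC (q : ℂ) (k N : ℕ) : ℂ := qPoch q q (2*k+N) * (ip q k * ip q ((k + N : ℕ) : ℤ))

lemma gC_bdd (hq1 : ‖q‖ < 1) : ∃ M : ℝ, 0 ≤ M ∧ ∀ (n : ℕ) (i j : ℤ), ‖qPoch q q n * (ip q i * ip q j)‖ ≤ M := by
  obtain ⟨M, h0, hM⟩ := bdd hq1 q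
  obtain ⟨M', h0', hM'⟩ := bdd_ip hq1
  refine ⟨M * (M' * M'), by positivity, fun n i j => ?_⟩
  rw [norm_mul, norm_mul]
  gcongr <;> first | exact hM _ | exact hM' _

lemma gC_summ (hq1 : ‖q‖ < 1) (N : ℕ) : Summable (fun k => q ^ k * gC q k N) := by
  obtain ⟨M, h0, hM⟩ := gC_bdd hq1
  refine Summable.of_norm_bounded ((summable_geometric_of_lt_one (norm_nonneg _) hq1).mul_right M) ?_
  intro k
  rw [norm_mul, norm_pow]
  gcongr
  exact hM _ _ _

lemma gC_tele (hq1 : ‖q‖ < 1) (N K : ℕ) : gC q (K+1) (N+1) =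
    ∑ k ∈ range (K+2), q ^ k * gC q k N + ∑ k ∈ range K, q ^ (k+N+3) * gC q k (N+3) := by
  induction K with
  | zero =>
    simp only [Finset.sum_range_succ, Finset.sum_range_zero, gC, ip_nat]
    have h1 := qP_ne hq1 N
    have h2 := qP_ne hq1 (N+1)
    have h3 := qP_ne hq1 (N+2)
    have h4 := pw_ne hq1 0
    have e1 := qP_succ q q (N+2)
    have e2 := qP_succ q q (N+1)
    have h5 := pw_ne hq1 (N+1)
    have e0 : qPoch q q 0 = 1 := by simp [qPoch]
    have e3 : qPoch q q 1 = 1 - q := by simp [qPoch]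
    simp only [pow_zero, mul_one] at h4
    simp only [show 2*(0+1)+(N+1) = N+2+1 by ring, show 0+1+(N+1) = N+2 by ring,
      show 2 * 0 + N = N by ring, show 2*(0+1)+N = N+2 by ring, show 0+1+N=N+1 by ring, e0,
      show 0 + 1 = 1 by rfl, e3]
    rw [e1]
    field_simp
    rw [e2]
    ring
  | succ K ih =>
    rw [Finset.sum_range_succ, Finset.sum_range_succ _ K]
    have : gC q (K+1+1) (N+1) = gC q (K+1) (N+1) + q^(K+2) * gC q (K+2) N + q^(K+N+3) * gC q K (N+3) := by
      simp only [gC, ip_nat]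
      simp only [show 2*(K+1+1)+(N+1) = 2*K+N+3+1+1 by ring, show 2*(K+1)+(N+1) = 2*K+N+3 by ring,
        show 2*(K+2)+N = 2*K+N+3+1 by ring, show 2*K+(N+3) = 2*K+N+3 by ring,
        show K+1+1+(N+1) = K+N+2+1 by ring, show K+1+(N+1) = K+N+2 by ring, show K+2+N=K+N+2 by ring,
        show K+(N+3) = K+N+2+1 by ring, show K + 2 = K+1+1 by ring]
      rw [qP_succ _ _ (2*K+N+3+1), qP_succ _ _ (2*K+N+3), qP_succ _ _ (K+N+2), qP_succ _ _ (K+1), qP_succ _ _ K]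
      have h1 := qP_ne hq1 K
      have h2 := qP_ne hq1 (K+N+2)
      have h3 := pw_ne hq1 K
      have h4 := pw_ne hq1 (K+1)
      have h5 := pw_ne hq1 (K+N+2)
      field_simp
      ring
    rw [this, ih]; ring

lemma gC_tendsto (hq1 : ‖q‖ < 1) (N : ℕ) :
    Filter.Tendsto (fun K => gC q (K+1) (N+1)) Filter.atTop (nhds (1 / qPochInf q q)) := by
  have h := qP_tendsto hq1 q
  have hn := qPI_ne hq1
  simp only [gC, ip_nat]
  have a1 : Filter.Tendsto (fun K : ℕ => 2*(K+1)+(N+1)) Filter.atTop Filter.atTop :=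
    Filter.tendsto_atTop_mono (fun K => by simp only [id]; omega) Filter.tendsto_id
  have a2 : Filter.Tendsto (fun K : ℕ => K+1) Filter.atTop Filter.atTop :=
    Filter.tendsto_atTop_mono (fun K => by simp only [id]; omega) Filter.tendsto_id
  have a3 : Filter.Tendsto (fun K : ℕ => K+1+(N+1)) Filter.atTop Filter.atTop :=
    Filter.tendsto_atTop_mono (fun K => by simp only [id]; omega) Filter.tendsto_id
  have := (h.comp a1).mul (((h.comp a2).inv₀ hn).mul ((h.comp a3).inv₀ hn))
  have e : 1 / qPochInf q q = qPochInf q q * ((qPochInf q q)⁻¹ * (qPochInf q q)⁻¹) := by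
    field_simp
  rw [e]
  exact this

lemma A_rec (hq1 : ‖q‖ < 1) (N : ℕ) : ∑' k, q ^ k * gC q k N =
    1 / qPochInf q q - q ^ (N+3) * ∑' k, q ^ k * gC q k (N+3) := by
  have h1 := ((gC_summ hq1 N).hasSum.tendsto_sum_nat).comp (Filter.tendsto_add_atTop_nat 2)
  have h2 := (((gC_summ hq1 (N+3)).hasSum.mul_left (q^(N+3))).tendsto_sum_nat)
  have h3 := tendsto_nhds_unique (gC_tendsto hq1 N) ((h1.add h2).congr fun K => ?_)
  · rw [h3]; ring
  · rw [gC_tele hq1]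
    simp only [Function.comp]
    congr 1
    refine Finset.sum_congr rfl fun k _ => ?_
    ring

/-- triangular number n(n+1)/2 -/
def tri (n : ℕ) : ℕ := n * (n+1) / 2

lemma tri_two (n : ℕ) : tri n * 2 = n * (n+1) :=
  Nat.div_mul_cancel (Nat.even_mul_succ_self n).two_dvd

lemma tri_succ (n : ℕ) : tri (n+1) = tri n + (n+1) := by
  have := tri_two n
  have := tri_two (n+1)
  nlinarith

lemma A_iter (hq1 : ‖q‖ < 1) (N m : ℕ) : ∑' k, q ^ k * gC q k N =
    ∑ n ∈ range m, 1 / qPochInf q q * ((-1)^n * q ^ (3 * tri n + n * N)) +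
     (-1)^m * q ^ (3 * tri m + m * N) * ∑' k, q ^ k * gC q k (N+3*m) := by
  induction m with
  | zero => simp [tri]
  | succ m ih =>
    rw [ih, Finset.sum_range_succ, A_rec hq1 (N+3*m), tri_succ,
      show N + 3 * (m+1) = N+3*m+3 by ring]
    ring

lemma A_hasSum (hq1 : ‖q‖ < 1) (N : ℕ) :
    ∑' n : ℕ, 1 / qPochInf q q * ((-1)^n * q ^ (3 * tri n + n * N)) = ∑' k, q ^ k * gC q k N := by
  have hs : Summable (fun n : ℕ => 1 / qPochInf q q * ((-1)^n * q ^ (3 * tri n + n * N))) := by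
    apply Summable.mul_left
    refine Summable.of_norm_bounded (summable_geometric_of_lt_one (norm_nonneg _) hq1) fun n => ?_
    simp only [norm_mul, norm_pow, norm_neg, norm_one, one_pow, one_mul]
    apply pow_le_pow_of_le_one (norm_nonneg _) hq1.le
    have := tri_two n
    nlinarith [Nat.zero_le (n*N)]
  obtain ⟨M, h0, hM⟩ := gC_bdd hq1
  have hA : ∀ N, ‖∑' k, q ^ k * gC q k N‖ ≤ (1 - ‖q‖)⁻¹ * M := fun N => by
    refine tsum_of_norm_bounded ((hasSum_geometric_of_lt_one (norm_nonneg _) hq1).mul_right M) ?_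
    intro k
    rw [norm_mul, norm_pow]
    gcongr
    exact hM _ _ _
  have h1 : Filter.Tendsto (fun m : ℕ => (-1)^m * q ^ (3 * tri m + m * N) * ∑' k, q ^ k * gC q k (N+3*m))
      Filter.atTop (nhds 0) := by
    refine squeeze_zero_norm (a := fun m => ‖q‖^m * ((1 - ‖q‖)⁻¹ * M)) (fun m => ?_) ?_
    · simp only [norm_mul, norm_pow, norm_neg, norm_one, one_pow, one_mul]
      refine mul_le_mul ?_ (hA _) (norm_nonneg _) (by positivity)
      apply pow_le_pow_of_le_one (norm_nonneg _) hq1.le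
      have := tri_two m
      nlinarith [Nat.zero_le (m*N)]
    · simpa using (tendsto_pow_atTop_nhds_zero_of_lt_one (norm_nonneg _) hq1).mul_const ((1 - ‖q‖)⁻¹ * M)
  have h2 := hs.hasSum.tendsto_sum_nat.add h1
  rw [add_zero] at h2
  exact (tendsto_nhds_unique (tendsto_const_nhds.congr (A_iter hq1 N)) h2).symm

lemma hs_congr {ι : Type*} {f g : ι → ℂ} {a b : ℂ} (h : HasSum f a) (hf : ∀ i, g i = f i)
    (ha : b = a) : HasSum g b := by
  rw [ha, funext hf]; exact h

noncomputable def cc (q : ℂ) (k : ℕ) (r : ℤ) : ℂ :=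
  qPoch q q (2*k+1) * (ip q (k - r) * ip q (k + r + 1))

noncomputable def th (q x : ℂ) (r : ℤ) : ℂ := (-1)^r * q ^ (r*(r+1)/2) * x ^ (-r)

lemma th_succ (hq0 : q ≠ 0) {x : ℂ} (hx : x ≠ 0) (r : ℤ) :
    x * th q x (r+1) = - (q * q ^ r) * th q x r := by
  have h : (r+1)*(r+1+1)/2 = r*(r+1)/2 + (r + 1) := by
    rw [show (r+1)*(r+1+1) = r*(r+1) + (r+1)*2 by ring, Int.add_mul_ediv_right _ _ (by norm_num)]
  unfold th
  rw [h, zpow_add₀ hq0, zpow_add₀ hq0, zpow_one, zpow_add₀ (by norm_num : (-1:ℂ) ≠ 0),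
    show -(r+1) = -r - 1 by ring, zpow_sub₀ hx, zpow_one, zpow_one]
  field_simp

lemma cc_step (hq0 : q ≠ 0) (hq1 : ‖q‖ < 1) (k : ℕ) (r : ℤ) :
    cc q (k+1) r = (1 + q^(2*k+2)) * cc q k r + q^(k+1) * (q * q ^ r) * cc q k (r+1)
      + q^(k+1) * (q^r)⁻¹ * cc q k (r-1) := by
  unfold cc
  have e1 := ip_step hq1 ((k:ℤ) - r)
  have e2 := ip_step hq1 ((k:ℤ) - r - 1)
  have e3 := ip_step hq1 ((k:ℤ) + r + 1)
  have e4 := ip_step hq1 ((k:ℤ) + r)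
  have hR : q ^ r ≠ 0 := zpow_ne_zero _ hq0
  rw [show (k:ℤ) - r - 1 + 1 = k - r by ring, e1] at e2
  rw [e3] at e4
  push_cast
  rw [show (k:ℤ) + 1 - r = k - r + 1 by ring, show (k:ℤ) + 1 + r + 1 = k + r + 1 + 1 by ring,
    show (k:ℤ) - (r+1) = k - r - 1 by ring, show (k:ℤ) + (r + 1) + 1 = k + r + 1 + 1 by ring,
    show (k:ℤ) - (r-1) = k - r + 1 by ring, show (k:ℤ) + (r - 1) + 1 = k + r by ring,
    e4, e3, e2, e1, show 2 * (k+1)+1 = 2*k+1+1+1 by ring, qP_succ, qP_succ]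
  rw [show (k:ℤ) + r + 1 + 1 = k + 1 + r + 1 by ring, show (k:ℤ) - r + 1 = (k + 1) - r by ring,
    show (k:ℤ) - r = (k + 1) - r - 1 by ring, show (k:ℤ) + r + 1 = k+1+r by ring]
  simp only [zpow_add₀ hq0, zpow_sub₀ hq0, zpow_one, zpow_natCast]
  field_simp
  ring

lemma hasSum_P (hq0 : q ≠ 0) (hq1 : ‖q‖ < 1) {x : ℂ} (hx : x ≠ 0) (k : ℕ) :
    HasSum (fun r : ℤ => th q x r * cc q k r)
      ((1 - x) * (qPoch q (x*q) k * qPoch q (q/x) k)) := by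
  induction k with
  | zero =>
    have h := hasSum_sum_of_ne_finset_zero (L := SummationFilter.unconditional ℤ) (f := fun r : ℤ => th q x r * cc q 0 r)
      (s := ({0, -1} : Finset ℤ)) (fun r hr => by
        simp only [Finset.mem_insert, Finset.mem_singleton, not_or] at hr
        have : ip q ((0:ℕ) - r) * ip q ((0:ℕ) + r + 1) = 0 := by
          rcases lt_or_ge r 0 with h | h
          · rw [mul_eq_zero]; right; simp [ip]; omega
          · rw [mul_eq_zero]; left; simp [ip]; omega
        simp only [cc]; rw [this]; simp)
    refine hs_congr h (fun _ => rfl) ?_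
    have h4 := pw_ne hq1 0
    simp only [pow_zero, mul_one] at h4
    rw [Finset.sum_insert (by simp), Finset.sum_singleton]
    simp [th, cc, ip, qPoch, h4]
    ring
  | succ k ih =>
    have s1 := ih.mul_left (1 + q^(2*k+2))
    have s2 := ((Equiv.addRight (1:ℤ)).hasSum_iff.mpr ih).mul_left (q^(k+1) * x)
    have s3 := ((Equiv.addRight (-1:ℤ)).hasSum_iff.mpr ih).mul_left (q^(k+1) * x⁻¹)
    refine hs_congr ((s1.sub s2).sub s3) (fun r => ?_) ?_
    · simp only [Function.comp, Equiv.coe_addRight]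
      have t1 := th_succ hq0 hx r
      have t2 := th_succ hq0 hx (r-1)
      have hR : q ^ r ≠ 0 := zpow_ne_zero _ hq0
      rw [sub_add_cancel, zpow_sub₀ hq0, zpow_one] at t2
      have t3 : x⁻¹ * th q x (r + -1) = - (q^r)⁻¹ * th q x r := by
        rw [← sub_eq_add_neg]
        field_simp
        field_simp at t2
        linear_combination t2
      rw [cc_step hq0 hq1, ← sub_eq_add_neg]
      rw [← sub_eq_add_neg] at t3
      linear_combination (q^(k+1) * cc q k (r+1)) * t1 + (q^(k+1) * cc q k (r-1)) * t3
    · rw [qP_succ, qP_succ]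
      field_simp
      ring

noncomputable def tn (q y : ℂ) (n : ℕ) : ℂ := (-1)^n * q ^ tri n * y ^ n

lemma tri_cast (n : ℕ) : (n:ℤ) * (n+1) / 2 = tri n := by
  simp [tri]

lemma th_nat (q x : ℂ) (n : ℕ) : th q x n = tn q x⁻¹ n := by
  unfold th tn
  rw [tri_cast]; simp

lemma th_neg (q : ℂ) {x : ℂ} (hx : x ≠ 0) (n : ℕ) : th q x (-((n:ℤ)+1)) = - x * tn q x n := by
  unfold th tn
  rw [show (-((n:ℤ)+1)) * (-((n:ℤ)+1) + 1) = n * (n+1) by ring, tri_cast, neg_neg, zpow_neg,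
    ← inv_zpow, zpow_add_one₀ (by norm_num), zpow_add_one₀ hx]
  norm_num
  ring

lemma tn_summ (hq0 : q ≠ 0) (hq1 : ‖q‖ < 1) {y : ℂ} (hy : y ≠ 0) :
    Summable (fun n => ‖tn q y n‖) := by
  have h : ∀ n, tn q y (n+1) = tn q y n * (-(y * q^(n+1))) := fun n => by
    unfold tn; rw [tri_succ]; ring
  have h0 : ∀ n, tn q y n ≠ 0 := fun n => by unfold tn; simp [hq0, hy]
  refine summable_of_ratio_test_tendsto_lt_one (l := 0) zero_lt_one
    (Filter.Eventually.of_forall fun n => by simpa using h0 n) ?_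
  have h2 : Filter.Tendsto (fun n : ℕ => ‖y‖ * ‖q‖^(n+1)) Filter.atTop (nhds 0) := by
    simpa using ((tendsto_pow_atTop_nhds_zero_of_lt_one (norm_nonneg _) hq1).comp
      (Filter.tendsto_add_atTop_nat 1)).const_mul ‖y‖
  refine h2.congr fun n => ?_
  have := norm_ne_zero_iff.mpr (h0 n)
  rw [h]
  simp only [norm_mul, norm_norm, norm_neg, norm_pow]
  field_simp

lemma th_summ (hq0 : q ≠ 0) (hq1 : ‖q‖ < 1) {x : ℂ} (hx : x ≠ 0) :
    Summable (fun r => ‖th q x r‖) := by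
  refine Summable.of_nat_of_neg_add_one ?_ ?_
  · simp only [th_nat]; exact tn_summ hq0 hq1 (inv_ne_zero hx)
  · simp only [th_neg q hx, norm_mul]; exact (tn_summ hq0 hq1 hx).mul_left _

noncomputable def bT (q : ℂ) (n m : ℕ) : ℂ := q ^ n * ((-1)^m * q ^ (3 * tri m + m * (2*n+1)))

lemma bT_norm (hq1 : ‖q‖ < 1) (n m : ℕ) : ‖bT q n m‖ ≤ ‖q‖ ^ m := by
  unfold bT
  simp only [norm_mul, norm_pow, norm_neg, norm_one, one_pow, one_mul, ← pow_add]
  apply pow_le_pow_of_le_one (norm_nonneg _) hq1.le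
  nlinarith [Nat.zero_le (m*n)]

lemma V_summ (hq0 : q ≠ 0) (hq1 : ‖q‖ < 1) {y : ℂ} (hy : y ≠ 0) :
    Summable (fun p : ℕ × ℕ => ‖tn q y p.1 * bT q p.1 p.2‖) := by
  refine Summable.of_nonneg_of_le (fun _ => norm_nonneg _) (fun p => ?_)
    ((tn_summ hq0 hq1 hy).mul_of_nonneg (summable_geometric_of_lt_one (norm_nonneg q) hq1)
      (fun _ => norm_nonneg _) (fun _ => by positivity))
  rw [norm_mul]
  gcongr
  exact bT_norm hq1 _ _

lemma hT_pos (hq0 : q ≠ 0) (x : ℂ) (n m : ℕ) : hTerm q x (n, m) = tn q x⁻¹ n * bT q n m := by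
  unfold hTerm tn bT
  have h1 : (m:ℤ) * (3 * m + 5) / 2 = 3 * tri m + m := by
    have := tri_two m
    zify at this
    rw [show (m:ℤ) * (3*m+5) = (3 * tri m + m) * 2 by linear_combination -3 * this]
    simp
  have h2 : (n:ℤ) * (n + 3) / 2 = tri n + n := by
    have := tri_two n
    zify at this
    rw [show (n:ℤ) * (n+3) = (tri n + n) * 2 by linear_combination - this]
    simp
  simp only [h1, h2]
  rw [show (3 * (tri m:ℤ) + m + 2 * m * n + (tri n + n)) = ((3 * tri m + m + 2 * m * n + (tri n + n) : ℕ) : ℤ) by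
    push_cast; ring, zpow_natCast, zpow_neg, zpow_natCast, zpow_add₀ (by norm_num), zpow_natCast, zpow_natCast, inv_pow]
  ring

lemma hT_neg (hq0 : q ≠ 0) {x : ℂ} (hx : x ≠ 0) (n m : ℕ) :
    hTerm q x (-((n:ℤ)+1), -((m:ℤ)+1)) = x * (tn q x n * bT q n m) := by
  have h := hT_pos hq0 x⁻¹ n m
  rw [inv_inv] at h
  rw [← h]
  unfold hTerm
  have h1 : (m:ℤ) * (3 * m + 5) / 2 = 3 * tri m + m := by
    have := tri_two m
    zify at this
    rw [show (m:ℤ) * (3*m+5) = (3 * tri m + m) * 2 by linear_combination -3 * this]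
    simp
  have h2 : (n:ℤ) * (n + 3) / 2 = tri n + n := by
    have := tri_two n
    zify at this
    rw [show (n:ℤ) * (n+3) = (tri n + n) * 2 by linear_combination - this]
    simp
  have h3 : (-((m:ℤ)+1)) * (3 * (-((m:ℤ)+1)) + 5) / 2 = 3 * tri m - m - 1 := by
    have := tri_two m
    zify at this
    rw [show (-((m:ℤ)+1)) * (3 * (-((m:ℤ)+1)) + 5) = (3 * tri m - m - 1) * 2 by linear_combination -3 * this]
    simp
  have h4 : (-((n:ℤ)+1)) * (-((n:ℤ)+1) + 3) / 2 = tri n - n - 1 := by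
    have := tri_two n
    zify at this
    rw [show (-((n:ℤ)+1)) * (-((n:ℤ)+1) + 3) = (tri n - n - 1) * 2 by linear_combination - this]
    simp
  simp only [h1, h2, h3, h4]
  rw [show (3 * (tri m:ℤ) - m - 1 + 2 * (-((m:ℤ)+1)) * (-((n:ℤ)+1)) + (tri n - n - 1)) =
    (3 * (tri m:ℤ) + m + 2 * m * n + (tri n + n)) by ring, neg_neg, inv_zpow, zpow_neg, inv_inv,
    zpow_add_one₀ hx, show -((m:ℤ)+1) + -((n:ℤ)+1) = -((m:ℤ)+n) + -2 by ring,
    zpow_add₀ (by norm_num), zpow_neg, ← inv_zpow]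
  norm_num
  ring

def ePos : ℕ × ℕ ≃ {p : ℤ × ℤ // 0 ≤ p.1 ∧ 0 ≤ p.2} where
  toFun p := ⟨((p.1 : ℤ), (p.2 : ℤ)), by simp⟩
  invFun p := (p.1.1.toNat, p.1.2.toNat)
  left_inv p := by simp
  right_inv := by
    rintro ⟨⟨a, b⟩, h1, h2⟩
    simp only at h1 h2
    ext <;> simp <;> omega

def eNeg : ℕ × ℕ ≃ {p : ℤ × ℤ // p.1 < 0 ∧ p.2 < 0} where
  toFun p := ⟨(-((p.1 : ℤ)+1), -((p.2 : ℤ)+1)), by constructor <;> simp only <;> omega⟩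
  invFun p := ((-p.1.1-1).toNat, (-p.1.2-1).toNat)
  left_inv p := by simp
  right_inv := by
    rintro ⟨⟨a, b⟩, h1, h2⟩
    simp only at h1 h2
    ext <;> simp <;> omega

lemma cc_neg (k n : ℕ) : cc q k (-((n:ℤ)+1)) = cc q k n := by
  unfold cc
  rw [show (k:ℤ) - -((n:ℤ)+1) = k + n + 1 by ring, show (k:ℤ) + -((n:ℤ)+1) + 1 = k - n by ring]
  ring

lemma cc_summ (hq1 : ‖q‖ < 1) (r : ℤ) : Summable (fun k => q ^ k * cc q k r) := by
  obtain ⟨M, h0, hM⟩ := gC_bdd hq1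
  refine Summable.of_norm_bounded ((summable_geometric_of_lt_one (norm_nonneg _) hq1).mul_right M) ?_
  intro k
  rw [norm_mul, norm_pow]
  gcongr
  exact hM _ _ _

lemma cc_sum (hq1 : ‖q‖ < 1) (n : ℕ) :
    ∑' k, q ^ k * cc q k n = q ^ n * ∑' k, q ^ k * gC q k (2*n+1) := by
  rw [← (cc_summ hq1 n).sum_add_tsum_nat_add n, Finset.sum_eq_zero, zero_add, ← tsum_mul_left]
  · refine tsum_congr fun k => ?_
    unfold cc gC
    rw [show ((k + n : ℕ):ℤ) - n = k by push_cast; ring,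
      show ((k + n : ℕ):ℤ) + n + 1 = ((k + (2*n+1) : ℕ) : ℤ) by push_cast; ring,
      show 2 * (k+n)+1 = 2*k+(2*n+1) by ring]
    ring
  · intro k hk
    have := Finset.mem_range.mp hk
    have : ip q ((k:ℤ) - n) = 0 := by simp [ip]; omega
    simp [cc, this]

lemma cc_sum' (hq1 : ‖q‖ < 1) (n : ℕ) :
    ∑' k, q ^ k * cc q k n = 1 / qPochInf q q * ∑' m, bT q n m := by
  rw [cc_sum hq1, ← A_hasSum hq1, ← tsum_mul_left, ← tsum_mul_left]
  refine tsum_congr fun m => ?_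
  unfold bT; ring

lemma V_eq (hq0 : q ≠ 0) (hq1 : ‖q‖ < 1) {y : ℂ} (hy : y ≠ 0) :
    HasSum (fun n => tn q y n * ∑' k, q ^ k * cc q k n)
     (1 / qPochInf q q * ∑' p : ℕ × ℕ, tn q y p.1 * bT q p.1 p.2) := by
  have h := (V_summ hq0 hq1 hy).of_norm
  have h2 := h.hasSum.prod_fiberwise (fun n => (h.prod_factor n).hasSum)
  refine hs_congr (h2.mul_left (1 / qPochInf q q)) (fun n => ?_) rfl
  dsimp only
  rw [cc_sum' hq1, tsum_mul_left]
  ring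

lemma F_summ (hq0 : q ≠ 0) (hq1 : ‖q‖ < 1) {x : ℂ} (hx : x ≠ 0) :
    Summable (fun p : ℕ × ℤ => q ^ p.1 * (th q x p.2 * cc q p.1 p.2)) := by
  obtain ⟨M, h0, hM⟩ := gC_bdd hq1
  refine Summable.of_norm_bounded (((summable_geometric_of_lt_one (norm_nonneg q) hq1).mul_of_nonneg
    ((th_summ hq0 hq1 hx).mul_right M)
      (fun _ => by positivity) (fun _ => by positivity))) fun p => ?_
  rw [norm_mul, norm_mul, norm_pow]
  gcongr
  exact hM _ _ _

lemma main_eq (hq0 : q ≠ 0) (hq1 : ‖q‖ < 1) {x : ℂ} (hx : x ≠ 0) :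
    ∑' k : ℕ, q ^ k * ((1 - x) * (qPoch q (x*q) k * qPoch q (q/x) k)) =
    1 / qPochInf q q * ∑' p : ℕ × ℕ, tn q x⁻¹ p.1 * bT q p.1 p.2
     - x * (1 / qPochInf q q * ∑' p : ℕ × ℕ, tn q x p.1 * bT q p.1 p.2) := by
  have h := F_summ hq0 hq1 hx
  have h1 : ∑' k : ℕ, q ^ k * ((1 - x) * (qPoch q (x*q) k * qPoch q (q/x) k)) =
     ∑' (k : ℕ) (r : ℤ), q ^ k * (th q x r * cc q k r) := by
    refine tsum_congr fun k => ?_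
    exact ((hasSum_P hq0 hq1 hx k).mul_left (q^k)).tsum_eq.symm
  have h3 : ∑' (k : ℕ) (r : ℤ), q ^ k * (th q x r * cc q k r) =
      ∑' (r : ℤ) (k : ℕ), q ^ k * (th q x r * cc q k r) :=
    (Summable.tsum_comm (f := fun (k : ℕ) (r : ℤ) => q ^ k * (th q x r * cc q k r)) h).symm
  have h2 : ∀ r : ℤ, ∑' k : ℕ, q ^ k * (th q x r * cc q k r) = th q x r * ∑' k : ℕ, q ^ k * cc q k r := by
    intro r
    rw [← tsum_mul_left]
    exact tsum_congr fun k => by ring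
  rw [h1, h3, tsum_congr h2]
  have g1 : HasSum (fun n : ℕ => th q x (n:ℤ) * ∑' k : ℕ, q ^ k * cc q k (n:ℤ))
      (1 / qPochInf q q * ∑' p : ℕ × ℕ, tn q x⁻¹ p.1 * bT q p.1 p.2) :=
    hs_congr (V_eq hq0 hq1 (inv_ne_zero hx)) (fun n => by rw [th_nat]) rfl
  have g2 : HasSum (fun n : ℕ => th q x (-((n:ℤ)+1)) * ∑' k : ℕ, q ^ k * cc q k (-((n:ℤ)+1)))
      (-(x * (1 / qPochInf q q * ∑' p : ℕ × ℕ, tn q x p.1 * bT q p.1 p.2))) := by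
    refine hs_congr ((V_eq hq0 hq1 hx).mul_left (-x)) (fun n => ?_) (by ring)
    rw [th_neg q hx, tsum_congr (fun k => by rw [cc_neg])]
    ring
  have g3 := HasSum.of_nat_of_neg_add_one (f := fun r : ℤ => th q x r * ∑' k : ℕ, q ^ k * cc q k r) g1 g2
  rw [g3.tsum_eq, sub_eq_add_neg]

end

/-- `(1-x)·U_1(-x;q)` as a Hecke-type double sum, with absolute
convergence of all series. -/
theorem stmt6 (q x : ℂ) (hq0 : 0 < ‖q‖) (hq1 : ‖q‖ < 1)
    (hx : x ≠ 0) :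
    Summable (fun k : ℕ =>
      ‖qPoch q (x * q) k * qPoch q (q / x) k * q ^ (k + 1)‖) ∧
    Summable (fun p : {p : ℤ × ℤ // 0 ≤ p.1 ∧ 0 ≤ p.2} => ‖hTerm q x p.1‖) ∧
    Summable (fun p : {p : ℤ × ℤ // p.1 < 0 ∧ p.2 < 0} => ‖hTerm q x p.1‖) ∧
    (1 - x) * q⁻¹ *
      ∑' k : ℕ, qPoch q (x * q) k * qPoch q (q / x) k * q ^ (k + 1) =
    (1 / qPochInf q q) *
      ((∑' p : {p : ℤ × ℤ // 0 ≤ p.1 ∧ 0 ≤ p.2}, hTerm q x p.1) -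
       (∑' p : {p : ℤ × ℤ // p.1 < 0 ∧ p.2 < 0}, hTerm q x p.1)) := by

  have hq : q ≠ 0 := norm_pos_iff.mp hq0
  have hp : (fun p : {p : ℤ × ℤ // 0 ≤ p.1 ∧ 0 ≤ p.2} => hTerm q x p.1) ∘ ePos =
      fun p : ℕ × ℕ => tn q x⁻¹ p.1 * bT q p.1 p.2 := by
    funext p; exact hT_pos hq x p.1 p.2
  have hn : (fun p : {p : ℤ × ℤ // p.1 < 0 ∧ p.2 < 0} => hTerm q x p.1) ∘ eNeg =
      fun p : ℕ × ℕ => x * (tn q x p.1 * bT q p.1 p.2) := by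
    funext p; exact hT_neg hq hx p.1 p.2
  refine ⟨?_, ?_, ?_, ?_⟩
  · obtain ⟨M, h0, hM⟩ := bdd hq1 (x * q)
    obtain ⟨M', h0', hM'⟩ := bdd hq1 (q / x)
    refine Summable.of_nonneg_of_le (fun _ => norm_nonneg _) (fun k => ?_)
      ((summable_geometric_of_lt_one (norm_nonneg q) hq1).mul_left (M * M'))
    rw [norm_mul, norm_mul, norm_pow]
    gcongr ?_ * ?_ * ?_
    · exact hM k
    · exact hM' k
    · exact pow_le_pow_of_le_one (norm_nonneg _) hq1.le (by omega)
  · rw [← ePos.summable_iff]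
    convert V_summ hq hq1 (inv_ne_zero hx) using 2 with p
    exact congrArg norm (congrFun hp p)
  · rw [← eNeg.summable_iff]
    refine ((V_summ hq hq1 hx).mul_left ‖x‖).congr fun p => ?_
    rw [← norm_mul]
    exact (congrArg norm (congrFun hn p)).symm
  · rw [← ePos.tsum_eq, ← eNeg.tsum_eq]
    have e1 : ∑' c, hTerm q x (ePos c).1 = ∑' p : ℕ × ℕ, tn q x⁻¹ p.1 * bT q p.1 p.2 :=
      congrArg tsum hp |>.trans rfl
    have e2 : ∑' c, hTerm q x (eNeg c).1 = x * ∑' p : ℕ × ℕ, tn q x p.1 * bT q p.1 p.2 := by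
      rw [← tsum_mul_left]
      exact tsum_congr (congrFun hn)
    rw [e1, e2, mul_sub, mul_left_comm (1 / qPochInf q q) x, ← main_eq hq hq1 hx, ← tsum_mul_left]
    refine tsum_congr fun k => ?_
    field_simp
    ring
end

section
/- Let q ∈ ℂ with 0 < |q| < 1 and let x ∈ ℂ with x ≠ 0. Then Σ_{n ≥ 0} (x;q)_{n+1} (q/x;q)_n q^n = (1/(q;q)_∞) Σ_{r ≥ 0, n ≥ 0} (-1)^{n+r} x^{-r} q^{n(3n+5)/2 + 2nr + r(r+3)/2} (1 - x^{2r+1}), where all series converge absolutely. -/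
open Finset

lemma aux_ne (q : ℂ) (hq1 : ‖q‖ < 1) (n : ℕ) : 1 - q ^ (n+1) ≠ 0 := by
  intro h
  have h1 : q ^ (n+1) = 1 := (sub_eq_zero.mp h).symm
  have h2 : ‖q‖ ^ (n+1) = 1 := by rw [← norm_pow, h1, norm_one]
  have h3 := pow_lt_one₀ (norm_nonneg q) hq1 (Nat.succ_ne_zero n)
  exact absurd h2 h3.ne

lemma P_succ (q : ℂ) (n : ℕ) : qPoch q q (n+1) = qPoch q q n * (1 - q^(n+1)) := by
  simp [qPoch, prod_range_succ, pow_succ']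

lemma P_ne (q : ℂ) (hq1 : ‖q‖ < 1) (n : ℕ) : qPoch q q n ≠ 0 := by
  induction n with
  | zero => simp [qPoch]
  | succ n ih => rw [P_succ]; exact mul_ne_zero ih (aux_ne q hq1 n)

/-- Gaussian binomial [i+k; k]. -/
noncomputable def gB (q : ℂ) (i k : ℕ) : ℂ := qPoch q q (i+k) / (qPoch q q i * qPoch q q k)

lemma gB_zero_right (q : ℂ) (hq1 : ‖q‖ < 1) (i : ℕ) : gB q i 0 = 1 := by
  have := P_ne q hq1 i
  simp [gB, qPoch] at *
  exact this

lemma gB_zero_left (q : ℂ) (hq1 : ‖q‖ < 1) (i : ℕ) : gB q 0 i = 1 := by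
  have := P_ne q hq1 i
  simp [gB, qPoch] at *
  exact this

lemma gB_symm (q : ℂ) (i k : ℕ) : gB q i k = gB q k i := by
  simp [gB, add_comm, mul_comm]

lemma gB_pascal (q : ℂ) (hq1 : ‖q‖ < 1) (i k : ℕ) :
    gB q (i+1) (k+1) = gB q i (k+1) + q^(i+1) * gB q (i+1) k := by
  have h1 := P_ne q hq1 i
  have h2 := P_ne q hq1 k
  have h3 := aux_ne q hq1 i
  have h4 := aux_ne q hq1 k
  unfold gB
  rw [show i + 1 + (k+1) = (i+k+1)+1 by ring, show i + (k+1) = i+k+1 by ring,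
    show i + 1 + k = i+k+1 by ring]
  simp only [P_succ]
  field_simp
  ring

lemma gB_pascal' (q : ℂ) (hq1 : ‖q‖ < 1) (i k : ℕ) :
    gB q (i+1) (k+1) = gB q (i+1) k + q^(k+1) * gB q i (k+1) := by
  rw [gB_symm, gB_pascal q hq1, gB_symm, gB_symm q _ i]

lemma q_binomial (q : ℂ) (hq1 : ‖q‖ < 1) (y : ℂ) (N : ℕ) :
    qPoch q y N = ∑ k ∈ range (N+1), (-1)^k * q^(k.choose 2) * gB q (N-k) k * y^k := by
  induction N with
  | zero => simp [qPoch, gB]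
  | succ N ih =>
    have e : qPoch q y (N+1) = qPoch q y N * (1 - y * q^N) := by
      simp [qPoch, prod_range_succ]
    rw [e, sum_range_succ']
    have h1 : ∀ k ∈ range (N+1), (-1 : ℂ)^(k+1) * q^((k+1).choose 2) * gB q (N+1-(k+1)) (k+1) * y^(k+1)
       = (if k < N then (-1 : ℂ)^(k+1) * q^((k+1).choose 2) * gB q (N-(k+1)) (k+1) * y^(k+1) else 0)
        - y * q^N * ((-1)^k * q^(k.choose 2) * gB q (N-k) k * y^k) := by
      intro k hk
      have hk' : k ≤ N := by simpa [Nat.lt_succ_iff] using hk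
      obtain ⟨i, rfl⟩ := Nat.exists_eq_add_of_le hk'
      have hc : (k+1).choose 2 = k + k.choose 2 := by
        simp [Nat.choose_succ_succ' k 1]
      rw [hc]
      rcases i with _ | i
      · simp [gB_zero_left q hq1]; ring
      · rw [if_pos (by omega), show k + (i+1) + 1 - (k+1) = i+1 by omega,
          show k + (i+1) - (k+1) = i by omega, show k + (i+1) - k = i+1 by omega,
          gB_pascal q hq1]
        ring
    rw [sum_congr rfl h1, sum_sub_distrib, ← mul_sum, ← ih, sum_range_succ]
    have h2 : ∑ k ∈ range N, (if k < N then (-1 : ℂ)^(k+1) * q^((k+1).choose 2) * gB q (N-(k+1)) (k+1) * y^(k+1) else 0) = qPoch q y N - 1 := by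
      rw [ih, sum_range_succ']
      simp only [gB_zero_right q hq1]
      rw [sum_congr rfl (fun k hk => if_pos (mem_range.mp hk))]
      simp
    rw [h2]
    simp [gB_zero_right q hq1]
    ring

lemma refl_prod (q x : ℂ) (hq : q ≠ 0) (hx : x ≠ 0) (n : ℕ) :
    (∏ j ∈ range n, (1 - x / q^(j+1))) * q^((n+1).choose 2) = (-x)^n * qPoch q (q/x) n := by
  induction n with
  | zero => simp [qPoch]
  | succ n ih =>
    have e : qPoch q (q/x) (n+1) = qPoch q (q/x) n * (1 - q/x * q^n) := by
      simp [qPoch, prod_range_succ]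
    have hc : (n+1+1).choose 2 = n+1 + (n+1).choose 2 := by
      simp [Nat.choose_succ_succ' (n+1) 1]
    rw [e, prod_range_succ, hc, pow_succ (-x), pow_add]
    calc _ = ((∏ j ∈ range n, (1 - x / q^(j+1))) * q^((n+1).choose 2)) * ((1 - x/q^(n+1)) * q^(n+1)) := by ring
      _ = _ := by
        rw [ih]
        have : (1 - x/q^(n+1)) * q^(n+1) = (-x) * (1 - q/x * q^n) := by
          field_simp
          ring
        rw [this]; ring

lemma shift_prod (q x : ℂ) (hq : q ≠ 0) (hx : x ≠ 0) (n : ℕ) :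
    qPoch q (x / q^n) (n + (n+1)) * q^((n+1).choose 2) =
      (-x)^n * (qPoch q x (n+1) * qPoch q (q/x) n) := by
  have e : qPoch q (x / q^n) (n + (n+1)) = (∏ j ∈ range n, (1 - x / q^(j+1))) * qPoch q x (n+1) := by
    unfold qPoch
    rw [prod_range_add]
    congr 1
    · rw [← prod_range_reflect]
      refine prod_congr rfl fun j hj => ?_
      have hj' := mem_range.mp hj
      obtain ⟨i, rfl⟩ := Nat.exists_eq_add_of_lt hj'
      rw [show j + i + 1 - 1 - j = i by omega]
      congr 1
      field_simp
      ring
    · refine prod_congr rfl fun j hj => ?_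
      congr 1
      field_simp
      ring
  rw [e, mul_right_comm, refl_prod q x hq hx]
  ring

lemma choose_id (m r : ℕ) : m.choose 2 + (m+r+1).choose 2 = (m+r)*m + (r+1).choose 2 := by
  have : ((m.choose 2 + (m+r+1).choose 2 : ℕ) : ℚ) = (((m+r)*m + (r+1).choose 2 : ℕ) : ℚ) := by
    push_cast [Nat.cast_choose_two]; ring
  exact_mod_cast this

lemma choose_id' (m r : ℕ) : (m+r+(r+1)).choose 2 + (m+r+1).choose 2 + m.choose 2 + m
     = (m+r)*(m+r+(r+1)) + (r+1).choose 2 + m.choose 2 + m:= by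
  have : (((m+r+(r+1)).choose 2 + (m+r+1).choose 2 + m.choose 2 + m: ℕ) : ℚ)
    = (((m+r)*(m+r+(r+1)) + (r+1).choose 2 + m.choose 2 + m: ℕ) : ℚ) := by
    push_cast [Nat.cast_choose_two]; ring
  exact_mod_cast this

lemma finite_jtp (q x : ℂ) (hq : q ≠ 0) (hq1 : ‖q‖ < 1) (hx : x ≠ 0) (n : ℕ) :
    qPoch q x (n+1) * qPoch q (q/x) n =
      ∑ p ∈ antidiagonal n, (-1)^p.1 * x^(-(p.1:ℤ)) * q^((p.1+1).choose 2) * (1 - x^(2*p.1+1))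
        * gB q (p.2 + (2*p.1+1)) p.2 := by
  have hne : (-x)^n ≠ 0 := pow_ne_zero _ (neg_ne_zero.mpr hx)
  apply mul_left_cancel₀ hne
  rw [← shift_prod q x hq hx, q_binomial q hq1, show n + (n+1) + 1 = (n+1) + (n+1) by ring,
    sum_range_add, Finset.Nat.sum_antidiagonal_eq_sum_range_succ_mk, ← sum_range_reflect,
    ← sum_add_distrib, sum_mul, mul_sum]
  refine sum_congr rfl fun r hr => ?_
  obtain ⟨m, rfl⟩ := Nat.exists_eq_add_of_le (Nat.lt_succ_iff.mp (mem_range.mp hr))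
  simp only
  rw [show r + m + 1 - 1 - r = m by omega, show r + m - r = m by omega,
    show r + m + (r+m+1) - m = m + (2*r+1) by omega,
    show r + m + (r+m+1) - (r+m+1+r) = m by omega,
    show r + m + 1 + r = m + (2*r+1) by ring, gB_symm q m, zpow_neg, zpow_natCast]
  have c1 := congrArg (fun e => q^e) (choose_id m r)
  have c2 := congrArg (fun e => q^e) (show (m+(2*r+1)).choose 2 + (m+r+1).choose 2 = (m+r)*(m+(2*r+1)) + (r+1).choose 2 by
    have := choose_id' m r
    rw [show m+r+(r+1) = m+(2*r+1) by ring] at this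
    omega)
  simp only [pow_add _ (Nat.choose _ _), pow_add _ (_ * _)] at c1 c2
  rw [show r + m = m + r by ring]
  generalize gB q (m+(2*r+1)) m = g
  have s : ∀ k, (x / q^(m+r))^k = x^k / q^((m+r)*k) := fun k => by rw [div_pow, pow_mul]
  rw [s, s]
  have n1 : q^((m+r)*m) ≠ 0 := pow_ne_zero _ hq
  have n2 : q^((m+r)*(m+(2*r+1))) ≠ 0 := pow_ne_zero _ hq
  have d1 : q^(m.choose 2) = q^((m+r)*m) * q^((r+1).choose 2) / q^((m+r+1).choose 2) := by
    rw [eq_div_iff (pow_ne_zero _ hq), c1]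
  have d2 : q^((m+(2*r+1)).choose 2) = q^((m+r)*(m+(2*r+1))) * q^((r+1).choose 2) / q^((m+r+1).choose 2) := by
    rw [eq_div_iff (pow_ne_zero _ hq), c2]
  rw [d1, d2]
  have n3 : q^((m+r+1).choose 2) ≠ 0 := pow_ne_zero _ hq
  have n4 : x^r ≠ 0 := pow_ne_zero _ hx
  have sg : (-1:ℂ)^r * (-1)^r = 1 := by rw [← mul_pow]; simp
  have sg2 : (-1:ℂ)^(2*r) = 1 := by simp
  generalize q^((m+r+1).choose 2) = A at *
  generalize q^((m+r)*m) = B at *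
  generalize q^((m+r)*(m+(2*r+1))) = C at *
  have L : (-x)^(m+r) = (-1)^m * (-1)^r * x^m * x^r := by rw [neg_pow]; ring
  have L2 : (-1:ℂ)^(m+(2*r+1)) = - (-1)^m := by rw [pow_add, pow_succ, sg2]; ring
  rw [L, L2]
  have : (-1:ℂ)^m * (-1)^r * x^m * x^r * ((-1)^r * (x^r)⁻¹ * q^((r+1).choose 2) * (1 - x^(2*r+1)) * g)
     = (-1:ℂ)^m * x^m * q^((r+1).choose 2) * (1 - x^(2*r+1)) * g * ((-1)^r * (-1)^r) * (x^r * (x^r)⁻¹) := by ring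
  rw [this, sg, mul_inv_cancel₀ n4]
  field_simp
  ring

lemma summable_norm_qpow (q : ℂ) (hq1 : ‖q‖ < 1) : Summable (fun j : ℕ => ‖-(q * q^j)‖) := by
  simp only [norm_neg, norm_mul, norm_pow]
  exact (summable_geometric_of_lt_one (norm_nonneg q) hq1).mul_left _

lemma Pinf_ne (q : ℂ) (hq1 : ‖q‖ < 1) : qPochInf q q ≠ 0 := by
  have := tprod_one_add_ne_zero_of_summable (f := fun j : ℕ => -(q * q^j))
    (fun i => by
      have := aux_ne q hq1 i
      rwa [pow_succ', sub_eq_add_neg] at this) (summable_norm_qpow q hq1)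
  simpa [qPochInf, sub_eq_add_neg] using this

lemma P_tendsto (q : ℂ) (hq1 : ‖q‖ < 1) :
    Filter.Tendsto (fun n => qPoch q q n) Filter.atTop (nhds (qPochInf q q)) := by
  have := (multipliable_one_add_of_summable (summable_norm_qpow q hq1)).hasProd.tendsto_prod_nat
  simpa [qPochInf, qPoch, sub_eq_add_neg] using this

lemma P_bound (q : ℂ) (hq1 : ‖q‖ < 1) : ∃ C : ℝ, 0 < C ∧ ∀ i k, ‖gB q i k‖ ≤ C := by
  obtain ⟨C1, h1⟩ := (Metric.isBounded_range_of_tendsto _ (P_tendsto q hq1)).exists_norm_le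
  obtain ⟨C2, h2⟩ := (Metric.isBounded_range_of_tendsto _
    ((P_tendsto q hq1).inv₀ (Pinf_ne q hq1))).exists_norm_le
  have h1' : ∀ n, ‖qPoch q q n‖ ≤ C1 := fun n => h1 _ ⟨n, rfl⟩
  have h2' : ∀ n, ‖(qPoch q q n)⁻¹‖ ≤ C2 := fun n => h2 _ ⟨n, rfl⟩
  have p1 : 0 ≤ C1 := (norm_nonneg _).trans (h1' 0)
  have p2 : 0 ≤ C2 := (norm_nonneg _).trans (h2' 0)
  refine ⟨C1 * (C2 * C2) + 1, by positivity, fun i k => ?_⟩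
  have : gB q i k = qPoch q q (i+k) * ((qPoch q q i)⁻¹ * (qPoch q q k)⁻¹) := by
    rw [gB, div_eq_mul_inv, mul_inv]
  rw [this, norm_mul, norm_mul]
  have : ‖qPoch q q (i+k)‖ * (‖(qPoch q q i)⁻¹‖ * ‖(qPoch q q k)⁻¹‖) ≤ C1 * (C2 * C2) := by
    gcongr
    · exact h1' _
    · exact h2' _
    · exact h2' _
  linarith

noncomputable def Ss (q : ℂ) (a : ℕ) : ℂ := ∑' m : ℕ, q^m * gB q (m+a) m

noncomputable def Tt (q : ℂ) (a : ℕ) : ℂ := ∑' n : ℕ, (-1)^n * q^(3 * (n+1).choose 2 + n * a)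

lemma summ_S (q : ℂ) (hq1 : ‖q‖ < 1) (u v : ℕ → ℕ) :
    Summable (fun m : ℕ => q^m * gB q (u m) (v m)) := by
  obtain ⟨C, hC, h⟩ := P_bound q hq1
  refine Summable.of_norm_bounded
    ((summable_geometric_of_lt_one (norm_nonneg q) hq1).mul_right C) fun m => ?_
  rw [norm_mul, norm_pow]
  exact mul_le_mul_of_nonneg_left (h _ _) (by positivity)

lemma summ_S2 (q : ℂ) (hq1 : ‖q‖ < 1) (u v : ℕ → ℕ) :
    Summable (fun m : ℕ => q^(2*m) * gB q (u m) (v m)) := by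
  obtain ⟨C, hC, h⟩ := P_bound q hq1
  refine Summable.of_norm_bounded
    ((summable_geometric_of_lt_one (norm_nonneg q) hq1).mul_right C) fun m => ?_
  rw [norm_mul, norm_pow]
  exact mul_le_mul (pow_le_pow_of_le_one (norm_nonneg q) hq1.le (by omega)) (h _ _)
    (norm_nonneg _) (by positivity)

lemma S_bound (q : ℂ) (hq1 : ‖q‖ < 1) : ∃ K : ℝ, ∀ a, ‖Ss q a‖ ≤ K := by
  obtain ⟨C, hC, h⟩ := P_bound q hq1
  refine ⟨_, fun a => tsum_of_norm_bounded
    ((summable_geometric_of_lt_one (norm_nonneg q) hq1).mul_right C).hasSum fun m => ?_⟩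
  rw [norm_mul, norm_pow]
  exact mul_le_mul_of_nonneg_left (h _ _) (by positivity)

lemma T_term_le (q : ℂ) (hq1 : ‖q‖ < 1) (a n : ℕ) :
    ‖(-1 : ℂ)^n * q^(3 * (n+1).choose 2 + n * a)‖ ≤ ‖q‖^n := by
  rw [norm_mul, norm_pow, norm_pow, norm_neg, norm_one, one_pow, one_mul]
  refine pow_le_pow_of_le_one (norm_nonneg q) hq1.le ?_
  have : (n+1).choose 2 = n + n.choose 2 := by simp [Nat.choose_succ_succ' n 1]
  rw [this]
  have : 0 ≤ n * a := Nat.zero_le _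
  omega

lemma summ_T (q : ℂ) (hq1 : ‖q‖ < 1) (a : ℕ) :
    Summable (fun n : ℕ => (-1 : ℂ)^n * q^(3 * (n+1).choose 2 + n * a)) :=
  Summable.of_norm_bounded (summable_geometric_of_lt_one (norm_nonneg q) hq1)
    (T_term_le q hq1 a)

lemma T_bound (q : ℂ) (hq1 : ‖q‖ < 1) : ∃ K : ℝ, ∀ a, ‖Tt q a‖ ≤ K :=
  ⟨_, fun a => tsum_of_norm_bounded
    (summable_geometric_of_lt_one (norm_nonneg q) hq1).hasSum (T_term_le q hq1 a)⟩

lemma T_rec (q : ℂ) (hq1 : ‖q‖ < 1) (a : ℕ) : Tt q a = 1 - q^(a+3) * Tt q (a+3) := by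
  unfold Tt
  rw [(summ_T q hq1 a).tsum_eq_zero_add, ← tsum_mul_left, sub_eq_add_neg, ← tsum_neg]
  congr 1
  · simp
  · refine tsum_congr fun n => ?_
    have : (n+1+1).choose 2 = n+1 + (n+1).choose 2 := by
      simp [Nat.choose_succ_succ' (n+1) 1]
    rw [this]
    ring

lemma U_step (q : ℂ) (hq1 : ‖q‖ < 1) (a : ℕ) :
    Ss q (a+1) + q^(a+4) * Ss q (a+4) = Ss q a + q^(a+3) * Ss q (a+3) := by
  set R : ℂ := ∑' m : ℕ, q^(2*m) * gB q (m+a+2) m with hR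
  have h1 : Ss q (a+1) = Ss q a + q^(a+3) * R := by
    unfold Ss
    rw [(summ_S q hq1 (fun m => m+(a+1)) (fun m => m)).tsum_eq_zero_add,
      (summ_S q hq1 (fun m => m+a) (fun m => m)).tsum_eq_zero_add, hR, ← tsum_mul_left, add_assoc,
      ← Summable.tsum_add ((summable_nat_add_iff 1).mpr (summ_S q hq1 (fun m => m+a) (fun m => m)))
        ((summ_S2 q hq1 (fun m => m+a+2) (fun m => m)).mul_left _)]
    congr 1
    · simp [gB_zero_right q hq1]
    · refine tsum_congr fun m => ?_
      rw [show m + 1 + (a+1) = (m+1+a)+1 by ring, gB_pascal q hq1,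
        show m+1+a+1 = m+a+2 by ring]
      ring
  have h2 : Ss q (a+3) = R + q * Ss q (a+4) := by
    unfold Ss
    rw [(summ_S q hq1 (fun m => m+(a+3)) (fun m => m)).tsum_eq_zero_add, hR,
      (summ_S2 q hq1 (fun m => m+a+2) (fun m => m)).tsum_eq_zero_add, ← tsum_mul_left, add_assoc,
      ← Summable.tsum_add
        ((summable_nat_add_iff 1).mpr (summ_S2 q hq1 (fun m => m+a+2) (fun m => m)))
        ((summ_S q hq1 (fun m => m+(a+4)) (fun m => m)).mul_left _)]
    congr 1
    · simp [gB_zero_right q hq1]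
    · refine tsum_congr fun m => ?_
      rw [show m + 1 + (a+3) = (m+a+3)+1 by ring, gB_pascal' q hq1,
        show m+1+a+2 = m+a+3 by ring, show m+a+3+1 = m+(a+4) by ring]
      ring
  rw [h1, h2]
  ring

lemma euler (q : ℂ) (hq1 : ‖q‖ < 1) : ∑' m : ℕ, q^m * (qPoch q q m)⁻¹ = (qPochInf q q)⁻¹ := by
  have hs : Summable (fun m : ℕ => q^m * (qPoch q q m)⁻¹) := by
    obtain ⟨C2, h2⟩ := (Metric.isBounded_range_of_tendsto _
      ((P_tendsto q hq1).inv₀ (Pinf_ne q hq1))).exists_norm_le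
    refine Summable.of_norm_bounded
      ((summable_geometric_of_lt_one (norm_nonneg q) hq1).mul_right C2) fun m => ?_
    rw [norm_mul, norm_pow]
    exact mul_le_mul_of_nonneg_left (h2 _ ⟨m, rfl⟩) (by positivity)
  have hp : ∀ M, ∑ m ∈ range (M+1), q^m * (qPoch q q m)⁻¹ = (qPoch q q M)⁻¹ := by
    intro M
    induction M with
    | zero => simp [qPoch]
    | succ M ih =>
      rw [sum_range_succ, ih, P_succ]
      have := P_ne q hq1 M
      have := aux_ne q hq1 M
      field_simp
      ring
  have h1 := (Filter.tendsto_add_atTop_iff_nat 1).mpr hs.hasSum.tendsto_sum_nat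
  simp only [hp] at h1
  exact tendsto_nhds_unique h1 ((P_tendsto q hq1).inv₀ (Pinf_ne q hq1))

lemma S_tendsto (q : ℂ) (hq1 : ‖q‖ < 1) :
    Filter.Tendsto (fun a => Ss q a) Filter.atTop (nhds (qPochInf q q)⁻¹) := by
  obtain ⟨C, hC, h⟩ := P_bound q hq1
  rw [← euler q hq1]
  refine tendsto_tsum_of_dominated_convergence
    ((summable_geometric_of_lt_one (norm_nonneg q) hq1).mul_right C) (fun m => ?_)
    (Filter.Eventually.of_forall fun a m => ?_)
  · refine Filter.Tendsto.const_mul _ ?_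
    have hP := P_tendsto q hq1
    have hn := Pinf_ne q hq1
    have e1 : Filter.Tendsto (fun a => qPoch q q (m+a+m)) Filter.atTop (nhds (qPochInf q q)) := by
      have := (Filter.tendsto_add_atTop_iff_nat (m+m)).mpr hP
      refine this.congr fun a => ?_
      congr 1; ring
    have e2 : Filter.Tendsto (fun a => qPoch q q (m+a)) Filter.atTop (nhds (qPochInf q q)) := by
      have := (Filter.tendsto_add_atTop_iff_nat m).mpr hP
      refine this.congr fun a => ?_
      congr 1; ring
    have := e1.div (e2.mul_const (qPoch q q m)) (mul_ne_zero hn (P_ne q hq1 m))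
    have e3 : qPochInf q q / (qPochInf q q * qPoch q q m) = (qPoch q q m)⁻¹ := by
      have := P_ne q hq1 m
      field_simp
    rw [e3] at this
    exact this
  · rw [norm_mul, norm_pow]
    exact mul_le_mul_of_nonneg_left (h _ _) (by positivity)

lemma S_rec (q : ℂ) (hq1 : ‖q‖ < 1) (a : ℕ) :
    Ss q a + q^(a+3) * Ss q (a+3) = (qPochInf q q)⁻¹ := by
  have hc : ∀ b, Ss q (a+b) + q^(a+b+3) * Ss q (a+b+3) = Ss q a + q^(a+3) * Ss q (a+3) := by
    intro b
    induction b with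
    | zero => rfl
    | succ b ih => rw [← ih, ← U_step q hq1 (a+b)]; rfl
  have hS := S_tendsto q hq1
  have h1 : Filter.Tendsto (fun b => Ss q (a+b)) Filter.atTop (nhds (qPochInf q q)⁻¹) := by
    refine ((Filter.tendsto_add_atTop_iff_nat a).mpr hS).congr fun b => ?_
    rw [add_comm]
  have h2 : Filter.Tendsto (fun b => Ss q (a+b+3)) Filter.atTop (nhds (qPochInf q q)⁻¹) := by
    refine ((Filter.tendsto_add_atTop_iff_nat (a+3)).mpr hS).congr fun b => ?_
    congr 1; ring
  have h3 : Filter.Tendsto (fun b => q^(a+b+3)) Filter.atTop (nhds 0) := by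
    refine ((Filter.tendsto_add_atTop_iff_nat (a+3)).mpr
      (tendsto_pow_atTop_nhds_zero_of_norm_lt_one hq1)).congr fun b => ?_
    congr 1; ring
  have h4 := h1.add (h3.mul h2)
  simp only [hc, zero_mul, add_zero] at h4
  exact tendsto_nhds_unique tendsto_const_nhds h4

lemma S_eq (q : ℂ) (hq1 : ‖q‖ < 1) (a : ℕ) : Ss q a = (qPochInf q q)⁻¹ * Tt q a := by
  obtain ⟨K1, h1⟩ := S_bound q hq1
  obtain ⟨K2, h2⟩ := T_bound q hq1
  set p := (qPochInf q q)⁻¹ with hp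
  set K := K1 + ‖p‖ * K2
  have hD : ∀ a, ‖Ss q a - p * Tt q a‖ ≤ K := fun a => by
    refine (norm_sub_le _ _).trans ?_
    rw [norm_mul]
    exact add_le_add (h1 a) (mul_le_mul_of_nonneg_left (h2 a) (norm_nonneg _))
  have hN : ∀ N a, ‖Ss q a - p * Tt q a‖ ≤ ‖q‖^N * K := by
    intro N
    induction N with
    | zero => simpa using hD
    | succ N ih =>
      intro a
      have e : Ss q a - p * Tt q a = -(q^(a+3) * (Ss q (a+3) - p * Tt q (a+3))) := by
        rw [T_rec q hq1 a]
        have := S_rec q hq1 a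
        rw [← hp] at this
        linear_combination this
      rw [e, norm_neg, norm_mul, norm_pow, pow_succ' ‖q‖ N, mul_assoc ‖q‖]
      refine mul_le_mul ?_ (ih _) (norm_nonneg _) (norm_nonneg _)
      calc ‖q‖^(a+3) ≤ ‖q‖^1 := pow_le_pow_of_le_one (norm_nonneg q) hq1.le (by omega)
        _ = ‖q‖ := pow_one _
  have hl : Filter.Tendsto (fun N : ℕ => ‖q‖^N * K) Filter.atTop (nhds 0) := by
    simpa using (tendsto_pow_atTop_nhds_zero_of_lt_one (norm_nonneg q) hq1).mul_const K
  have := ge_of_tendsto' hl (fun N => hN N a)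
  exact sub_eq_zero.mp (norm_le_zero_iff.mp this)

lemma choose_two_mul (r : ℕ) : 2 * (r+1).choose 2 = r * (r+1) := by
  have : ((2 * (r+1).choose 2 : ℕ) : ℚ) = ((r * (r+1) : ℕ) : ℚ) := by
    push_cast [Nat.cast_choose_two]; ring
  exact_mod_cast this

lemma exp_id (r n : ℕ) : n * (3 * n + 5) / 2 + 2 * n * r + r * (r + 3) / 2
    = (r+1).choose 2 + r + (3 * (n+1).choose 2 + n * (2*r+1)) := by
  have h1 : n * (3 * n + 5) / 2 = 3 * (n+1).choose 2 + n := by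
    apply Nat.div_eq_of_eq_mul_left (by norm_num)
    have := choose_two_mul n
    nlinarith
  have h2 : r * (r + 3) / 2 = (r+1).choose 2 + r := by
    apply Nat.div_eq_of_eq_mul_left (by norm_num)
    have := choose_two_mul r
    nlinarith
  rw [h1, h2]; ring

lemma summ_theta (y t : ℝ) (hy : 0 < y) (ht : 0 < t) (ht1 : t < 1) :
    Summable (fun r : ℕ => y^r * t^((r+1).choose 2)) := by
  refine summable_of_ratio_test_tendsto_lt_one (l := 0) one_pos
    (Filter.Eventually.of_forall fun r => by positivity) ?_
  have h : Filter.Tendsto (fun r : ℕ => y * t^(r+1)) Filter.atTop (nhds 0) := by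
    simpa using ((Filter.tendsto_add_atTop_iff_nat 1).mpr
      (tendsto_pow_atTop_nhds_zero_of_lt_one ht.le ht1)).const_mul y
  refine h.congr fun r => ?_
  have : (r+1+1).choose 2 = r+1 + (r+1).choose 2 := by
    simp [Nat.choose_succ_succ' (r+1) 1]
  rw [Real.norm_of_nonneg (by positivity), Real.norm_of_nonneg (by positivity), this,
    eq_div_iff (by positivity)]
  ring

noncomputable def ww (q x : ℂ) (r : ℕ) : ℂ :=
  (-1)^r * x^(-(r:ℤ)) * q^((r+1).choose 2) * (1 - x^(2*r+1))

lemma summ_w (q x : ℂ) (hq0 : 0 < ‖q‖) (hq1 : ‖q‖ < 1) (hx : x ≠ 0) :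
    Summable (fun r => ‖ww q x r‖) := by
  have hx' : 0 < ‖x‖ := norm_pos_iff.mpr hx
  refine Summable.of_nonneg_of_le (fun r => norm_nonneg _) (fun r => ?_)
    ((summ_theta ‖x‖⁻¹ ‖q‖ (by positivity) hq0 hq1).add
      ((summ_theta ‖x‖ ‖q‖ hx' hq0 hq1).mul_left ‖x‖))
  have e : ‖ww q x r‖ = ‖x‖⁻¹^r * ‖q‖^((r+1).choose 2) * ‖1 - x^(2*r+1)‖ := by
    simp [ww]
  have h : ‖1 - x^(2*r+1)‖ ≤ 1 + ‖x‖^(2*r+1) := by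
    simpa using norm_sub_le (1:ℂ) (x^(2*r+1))
  rw [e]
  refine (mul_le_mul_of_nonneg_left h (by positivity)).trans (le_of_eq ?_)
  rw [inv_pow]
  field_simp
  ring

lemma summ_dom (q x : ℂ) (hq0 : 0 < ‖q‖) (hq1 : ‖q‖ < 1) (hx : x ≠ 0) (C : ℝ) (hC : 0 < C)
    (f : ℕ → ℕ → ℂ) (hf : ∀ r m, ‖f r m‖ ≤ ‖q‖^m * C) :
    Summable (fun p : ℕ × ℕ => ‖ww q x p.1 * f p.1 p.2‖) := by
  have := (summ_w q x hq0 hq1 hx).mul_of_nonneg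
    ((summable_geometric_of_lt_one (norm_nonneg q) hq1).mul_right C)
    (fun r => norm_nonneg _) (fun m => by positivity)
  refine Summable.of_nonneg_of_le (fun p => norm_nonneg _) (fun p => ?_) this
  rw [norm_mul]
  exact mul_le_mul_of_nonneg_left (hf _ _) (norm_nonneg _)
/-- `Σ_{n≥0} (x;q)_{n+1} (q/x;q)_n q^n` as a Hecke-type double sum over
pairs `(r,n)` of nonnegative integers, with absolute convergence of all series. -/
theorem stmt7 (q x : ℂ) (hq0 : 0 < ‖q‖) (hq1 : ‖q‖ < 1)
    (hx : x ≠ 0) :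
    Summable (fun n : ℕ => ‖qPoch q x (n + 1) * qPoch q (q / x) n * q ^ n‖) ∧
    Summable (fun p : ℕ × ℕ =>
      ‖(-1 : ℂ) ^ (p.2 + p.1) * x ^ (-(p.1 : ℤ)) *
          q ^ (p.2 * (3 * p.2 + 5) / 2 + 2 * p.2 * p.1 + p.1 * (p.1 + 3) / 2) *
          (1 - x ^ (2 * p.1 + 1))‖) ∧
    ∑' n : ℕ, qPoch q x (n + 1) * qPoch q (q / x) n * q ^ n =
    (1 / qPochInf q q) *
      ∑' p : ℕ × ℕ,
        (-1 : ℂ) ^ (p.2 + p.1) * x ^ (-(p.1 : ℤ)) *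
          q ^ (p.2 * (3 * p.2 + 5) / 2 + 2 * p.2 * p.1 + p.1 * (p.1 + 3) / 2) *
          (1 - x ^ (2 * p.1 + 1)) := by
  have hq : q ≠ 0 := norm_pos_iff.mp hq0
  obtain ⟨C, hC, hB⟩ := P_bound q hq1
  have hle : ∀ r : ℕ, ‖q‖^r ≤ 1 := fun r => pow_le_one₀ (norm_nonneg q) hq1.le
  have eF : ∀ n, qPoch q x (n + 1) * qPoch q (q / x) n * q ^ n =
      ∑ p ∈ antidiagonal n, ww q x p.1 * (q^p.1 * (q^p.2 * gB q (p.2 + (2*p.1+1)) p.2)) := by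
    intro n
    rw [finite_jtp q x hq hq1 hx, sum_mul]
    refine sum_congr rfl fun p hp => ?_
    rw [← mem_antidiagonal.mp hp, ww]
    ring
  have eG : ∀ p : ℕ × ℕ, (-1 : ℂ) ^ (p.2 + p.1) * x ^ (-(p.1 : ℤ)) *
          q ^ (p.2 * (3 * p.2 + 5) / 2 + 2 * p.2 * p.1 + p.1 * (p.1 + 3) / 2) *
          (1 - x ^ (2 * p.1 + 1)) =
      ww q x p.1 * (q^p.1 * ((-1)^p.2 * q^(3 * (p.2+1).choose 2 + p.2 * (2*p.1+1)))) := by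
    intro p
    rw [exp_id, ww]
    ring
  have sF := summ_dom q x hq0 hq1 hx C hC
    (fun r m => q^r * (q^m * gB q (m + (2*r+1)) m)) (fun r m => by
      rw [norm_mul, norm_mul, norm_pow, norm_pow]
      have : ‖q‖^m * ‖gB q (m + (2*r+1)) m‖ ≤ ‖q‖^m * C :=
        mul_le_mul_of_nonneg_left (hB _ _) (by positivity)
      exact (mul_le_of_le_one_left (by positivity) (hle r)).trans this)
  have sG := summ_dom q x hq0 hq1 hx 1 one_pos
    (fun r n => q^r * ((-1)^n * q^(3 * (n+1).choose 2 + n * (2*r+1)))) (fun r m => by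
      rw [norm_mul, norm_pow, mul_one]
      exact (mul_le_of_le_one_left (norm_nonneg _) (hle r)).trans (T_term_le q hq1 _ _))
  have sF' := (HasAntidiagonal.sigmaAntidiagonalEquivProd (A := ℕ)).summable_iff.mpr sF
  simp only [eF, eG]
  refine ⟨?_, sG, ?_⟩
  · refine Summable.of_nonneg_of_le (fun n => norm_nonneg _) (fun n => ?_) sF'.sigma
    refine (norm_sum_le _ _).trans (le_of_eq ?_)
    rw [tsum_fintype, ← Finset.sum_coe_sort]
    rfl
  · have sF2 := (HasAntidiagonal.sigmaAntidiagonalEquivProd (A := ℕ)).summable_iff.mpr sF.of_norm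
    have step : ∑' n : ℕ, ∑ p ∈ antidiagonal n,
          ww q x p.1 * (q^p.1 * (q^p.2 * gB q (p.2 + (2*p.1+1)) p.2)) =
        ∑' p : ℕ × ℕ, ww q x p.1 * (q^p.1 * (q^p.2 * gB q (p.2 + (2*p.1+1)) p.2)) := by
      rw [← (HasAntidiagonal.sigmaAntidiagonalEquivProd (A := ℕ)).tsum_eq]
      refine Eq.trans ?_ sF2.tsum_sigma.symm
      refine tsum_congr fun n => ?_
      rw [tsum_fintype, ← Finset.sum_coe_sort]
      rfl
    rw [step, sF.of_norm.tsum_prod, sG.of_norm.tsum_prod, ← tsum_mul_left]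
    refine tsum_congr fun r => ?_
    simp only [tsum_mul_left]
    have := S_eq q hq1 (2*r+1)
    unfold Ss Tt at this
    rw [this]
    ring
end

section
/- Let t ≥ m ≥ 1 and N ≥ 1 be integers and let ζ = exp(2πi/N). Let L denote the limit, as q → ζ through complex numbers with q^N ≠ 1, of [ (-1)^N q^{-t + N((2t+1)N+1)/2} Σ_{k=-N}^{N-1} (-1)^k q^{-(2t+1)k(k+1)/2 + m k} ] / (1 - q^N). Then this limit exists and e^{2πi( t - (2t+1-2m)^2/(8(2t+1)) )/N} · L = (2t+1) N Σ_{k=1}^{4(2t+1)N} χ_{8t+4}^{(m)}(k) · e^{-2πi k^2/(8(2t+1)N)} · B_2( k/(4(2t+1)N) ). -/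
open Finset

/-- The periodic function `χ_{8T+4}^{(M)} : ℤ → {-1,0,1}` (with `T, M` the paper's
`t, m`): it is `1` on classes `± (2T+1-2M)` mod `8T+4`, `-1` on classes
`± (2T+1+2M)` mod `8T+4`, and `0` otherwise. -/
def chiP (T M k : ℤ) : ℤ :=
  if k % (8 * T + 4) = (2 * T + 1 - 2 * M) % (8 * T + 4) ∨
      k % (8 * T + 4) = (-(2 * T + 1 - 2 * M)) % (8 * T + 4) then 1
  else if k % (8 * T + 4) = (2 * T + 1 + 2 * M) % (8 * T + 4) ∨
      k % (8 * T + 4) = (-(2 * T + 1 + 2 * M)) % (8 * T + 4) then -1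
  else 0

/-- The second Bernoulli polynomial `B₂(x) = x² - x + 1/6` (on ℂ). -/
noncomputable def bern2 (x : ℂ) : ℂ := x ^ 2 - x + 1 / 6

noncomputable def nj (t m : ℕ) (j : ℤ) : ℤ := 2 * (2 * t + 3) * j + (2 * t - 2 * m + 1)

noncomputable def Eg (t N : ℕ) (x : ℂ) : ℂ :=
  Complex.exp (-2 * Real.pi * Complex.I * x ^ 2 / (8 * (2 * (t : ℂ) + 3) * N))

noncomputable def hj (t m N : ℕ) (j : ℤ) : ℂ := (-1 : ℂ) ^ j * Eg t N (nj t m j)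

lemma a_ne (t : ℕ) : (2 * (t : ℂ) + 3) ≠ 0 := by
  have : (2 * (t : ℂ) + 3) = ((2 * t + 3 : ℕ) : ℂ) := by push_cast; ring
  rw [this]; exact Nat.cast_ne_zero.2 (by omega)

lemma hj_add (t m N : ℕ) (hN : 1 ≤ N) (j : ℤ) : hj t m N (j + N) = - hj t m N j := by
  have hN' : (N : ℂ) ≠ 0 := by exact_mod_cast (by omega)
  have ha := a_ne t
  unfold hj Eg
  have e : (-2 * Real.pi * Complex.I * ((nj t m (j + N) : ℤ) : ℂ) ^ 2 / (8 * (2 * (t : ℂ) + 3) * N))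
      = (-2 * Real.pi * Complex.I * ((nj t m j : ℤ) : ℂ) ^ 2 / (8 * (2 * (t : ℂ) + 3) * N))
        + (((N + 1 : ℕ) : ℂ) * (Real.pi * Complex.I)
        + ((-((2 * t + 3) * j + t - m + 1 + (t + 2) * N) : ℤ) : ℂ) * (2 * Real.pi * Complex.I)) := by
    unfold nj
    push_cast
    field_simp
    ring
  rw [e, Complex.exp_add, Complex.exp_add, Complex.exp_int_mul_two_pi_mul_I, Complex.exp_nat_mul,
    Complex.exp_pi_mul_I, zpow_add₀ (by norm_num), zpow_natCast]
  have : ((-1 : ℂ) ^ N) * (-1) ^ N = 1 := by rw [← mul_pow]; norm_num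
  generalize Complex.exp (-2 * Real.pi * Complex.I * ((nj t m j : ℤ) : ℂ) ^ 2 / (8 * (2 * (t : ℂ) + 3) * N)) = X
  linear_combination (-(-1 : ℂ) ^ j * X) * this

lemma Eg_refl (t N : ℕ) (hN : 1 ≤ N) (n : ℤ) :
    Eg t N (4 * (2 * t + 3) * N - n) = Eg t N n := by
  have hN' : (N : ℂ) ≠ 0 := by exact_mod_cast (by omega)
  have ha := a_ne t
  unfold Eg
  have e : (-2 * Real.pi * Complex.I * (4 * (2 * (t : ℂ) + 3) * N - n) ^ 2 / (8 * (2 * (t : ℂ) + 3) * N))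
      = (-2 * Real.pi * Complex.I * (n : ℂ) ^ 2 / (8 * (2 * (t : ℂ) + 3) * N))
        + ((-(2 * (2 * t + 3) * N - 2 * n) - n : ℤ) : ℂ) * (2 * Real.pi * Complex.I) := by
    push_cast
    field_simp
    ring
  rw [e, Complex.exp_add, Complex.exp_int_mul_two_pi_mul_I, mul_one]

lemma sum_Icc_split (N : ℕ) (f : ℤ → ℂ) :
    ∑ k ∈ Finset.Icc (-(N : ℤ)) ((N : ℤ) - 1), f k
      = ∑ j ∈ Finset.range N, (f j + f ((j : ℤ) - N)) := by
  have h1 : ∑ k ∈ Finset.Icc (-(N : ℤ)) ((N : ℤ) - 1), f k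
      = ∑ i ∈ Finset.range (N + N), f ((i : ℤ) - N) := by
    refine Finset.sum_bij' (fun k _ => (k + N).toNat) (fun i _ => (i : ℤ) - N) ?_ ?_ ?_ ?_ ?_
    · intro k hk; simp only [Finset.mem_Icc, Finset.mem_range] at *; omega
    · intro k hk; simp only [Finset.mem_Icc, Finset.mem_range] at *; omega
    · intro k hk; simp only [Finset.mem_Icc] at *; omega
    · intro k hk; omega
    · intro k hk; simp only [Finset.mem_Icc] at *; congr 1; omega
  rw [h1, Finset.sum_range_add, Finset.sum_add_distrib, add_comm]
  congr 1
  refine Finset.sum_congr rfl fun i _ => ?_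
  congr 1; push_cast; ring

lemma tendsto_aux (N : ℕ) (hN : 1 ≤ N) (ζ : ℂ) (hz : ζ ^ N = 1) (F : ℂ → ℂ) (F' : ℂ)
    (hF : HasDerivAt F F' ζ) (h0 : F ζ = 0) :
    Filter.Tendsto (fun q => F q / (1 - q ^ N)) (nhdsWithin ζ {q : ℂ | q ^ N ≠ 1})
      (nhds (F' / (-(N * ζ ^ (N - 1))))) := by
  have hz0 : ζ ≠ 0 := by rintro rfl; rw [zero_pow (by omega)] at hz; norm_num at hz
  have hN' : (N : ℂ) ≠ 0 := by exact_mod_cast (by omega)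
  have hG : HasDerivAt (fun q : ℂ => 1 - q ^ N) (-(N * ζ ^ (N - 1))) ζ := by
    simpa using (hasDerivAt_pow N ζ).const_sub 1
  have h1 := (hasDerivAt_iff_tendsto_slope.1 hF).div (hasDerivAt_iff_tendsto_slope.1 hG)
    (neg_ne_zero.2 (mul_ne_zero hN' (pow_ne_zero _ hz0)))
  have hle : nhdsWithin ζ {q : ℂ | q ^ N ≠ 1} ≤ nhdsWithin ζ {ζ}ᶜ := by
    apply nhdsWithin_mono
    intro q hq h
    simp only [Set.mem_singleton_iff] at h
    exact hq (h ▸ hz)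
  refine (h1.mono_left hle).congr' ?_
  filter_upwards [hle self_mem_nhdsWithin] with q hq
  have : q - ζ ≠ 0 := sub_ne_zero.2 hq
  simp only [Pi.div_apply, slope, vsub_eq_sub, smul_eq_mul, h0, hz, sub_self, sub_zero]
  rw [mul_div_mul_left _ _ (inv_ne_zero this)]

/-- values of chi -/
lemma chi_nj (t m : ℕ) (hmt : m ≤ t) (j : ℤ) :
    ((chiP ((t : ℤ) + 1) ((m : ℤ) + 1) (nj t m j) : ℤ) : ℂ) = (-1 : ℂ) ^ j := by
  rcases Int.even_or_odd' j with ⟨q, rfl | rfl⟩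
  · have e : nj t m (2 * q) = (2 * ((t : ℤ) + 1) + 1 - 2 * (m + 1)) + (8 * ((t : ℤ) + 1) + 4) * q := by
      unfold nj; ring
    have : chiP ((t : ℤ) + 1) ((m : ℤ) + 1) (nj t m (2 * q)) = 1 := by
      unfold chiP
      rw [if_pos]
      left
      rw [e, Int.add_mul_emod_self_left]
    rw [this, zpow_mul]; simp
  · have e : nj t m (2 * q + 1) = (-(2 * ((t : ℤ) + 1) + 1 + 2 * (m + 1))) + (8 * ((t : ℤ) + 1) + 4) * (q + 1) := by
      unfold nj; ring
    have : chiP ((t : ℤ) + 1) ((m : ℤ) + 1) (nj t m (2 * q + 1)) = -1 := by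
      unfold chiP
      rw [e, Int.add_mul_emod_self_left, if_neg, if_pos]
      · right; rfl
      · rw [Int.emod_eq_emod_iff_emod_sub_eq_zero, Int.emod_eq_emod_iff_emod_sub_eq_zero,
          ← Int.dvd_iff_emod_eq_zero, ← Int.dvd_iff_emod_eq_zero]
        rintro (⟨c, hc⟩ | ⟨c, hc⟩)
        · have : (2 * (t : ℤ) + 3) * (1 + 2 * c) = 0 := by linarith
          rcases mul_eq_zero.1 this with h | h <;> omega
        · rcases lt_trichotomy c 0 with h | h | h
          · nlinarith
          · subst h; omega
          · nlinarith
    rw [this, zpow_add₀ (by norm_num), zpow_mul]; simp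

lemma chi_neg (T M k : ℤ) : chiP T M (-k) = chiP T M k := by
  unfold chiP
  have h : ∀ x : ℤ, ((-k) % (8 * T + 4) = x % (8 * T + 4)) ↔ (k % (8 * T + 4) = (-x) % (8 * T + 4)) := by
    intro x
    constructor
    · intro h
      have := Int.ModEq.neg (show (-k) ≡ x [ZMOD (8 * T + 4)] from h)
      rw [neg_neg] at this; exact this
    · intro h
      have := Int.ModEq.neg (show k ≡ -x [ZMOD (8 * T + 4)] from h)
      rw [neg_neg] at this; exact this
  simp only [h, neg_neg]
  congr 1
  · rw [or_comm]
  · congr 1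
    rw [or_comm]

lemma chi_refl (t m N : ℕ) (k : ℤ) :
    chiP ((t : ℤ) + 1) ((m : ℤ) + 1) (4 * (2 * t + 3) * N - k) = chiP ((t : ℤ) + 1) ((m : ℤ) + 1) k := by
  rw [← chi_neg _ _ k]
  have : (4 * (2 * (t : ℤ) + 3) * N - k) = -k + (8 * ((t : ℤ) + 1) + 4) * N := by ring
  unfold chiP
  rw [this, Int.add_mul_emod_self_left]

lemma nj_bd (t m N : ℕ) (hmt : m ≤ t) (j : ℕ) (hj : j < 2 * N) :
    0 < nj t m j ∧ nj t m j < 4 * (2 * t + 3) * N := by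
  unfold nj
  constructor
  · have : (0 : ℤ) ≤ 2 * (2 * t + 3) * j := by positivity
    omega
  · have : (j : ℤ) + 1 ≤ 2 * N := by exact_mod_cast hj
    have h2 := mul_le_mul_of_nonneg_left this (show (0 : ℤ) ≤ 2 * (2 * t + 3) by positivity)
    nlinarith

lemma chi_supp (t m N : ℕ) (hmt : m ≤ t) (k : ℤ) (hk1 : 1 ≤ k) (hk2 : k ≤ 4 * (2 * t + 3) * N)
    (h : chiP ((t : ℤ) + 1) ((m : ℤ) + 1) k ≠ 0) :
    ∃ j : ℕ, j < 2 * N ∧ (k = nj t m j ∨ k = 4 * (2 * t + 3) * N - nj t m j) := by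
  have key : ∃ j : ℤ, k = nj t m j ∨ k = 4 * (2 * t + 3) * N - nj t m j := by
    unfold chiP at h
    unfold nj
    have P : ∀ x : ℤ, k % (8 * ((t : ℤ) + 1) + 4) = x % (8 * ((t : ℤ) + 1) + 4) →
        ∃ c, k = x + (8 * ((t : ℤ) + 1) + 4) * c := by
      intro x hx
      obtain ⟨c, hc⟩ := Int.ModEq.dvd (show x ≡ k [ZMOD _] from hx.symm)
      exact ⟨c, by linarith⟩
    split_ifs at h with h1 h2
    · rcases h1 with h1 | h1 <;> obtain ⟨c, hc⟩ := P _ h1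
      · exact ⟨2 * c, Or.inl (by rw [hc]; ring)⟩
      · exact ⟨2 * (N - c), Or.inr (by rw [hc]; ring)⟩
    · rcases h2 with h1 | h1 <;> obtain ⟨c, hc⟩ := P _ h1
      · exact ⟨2 * (N - c) - 1, Or.inr (by rw [hc]; ring)⟩
      · exact ⟨2 * c - 1, Or.inl (by rw [hc]; ring)⟩
    · exact absurd rfl h
  obtain ⟨j, hj⟩ := key
  have hb : 0 ≤ nj t m j ∧ nj t m j ≤ 4 * (2 * t + 3) * N := by
    rcases hj with hj | hj <;> constructor <;> linarith
  unfold nj at hb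
  have ha : (0 : ℤ) < 2 * (2 * t + 3) := by positivity
  have j0 : 0 ≤ j := by
    by_contra hc
    have : j ≤ -1 := by omega
    nlinarith
  have j1 : j < 2 * N := by
    by_contra hc
    have : (2 * N : ℤ) ≤ j := by omega
    have := mul_le_mul_of_nonneg_left this ha.le
    nlinarith
  lift j to ℕ using j0
  exact ⟨j, by exact_mod_cast j1, hj⟩

lemma nj_ne (t m N : ℕ) (hmt : m ≤ t) (i j : ℤ) : nj t m i ≠ 4 * (2 * t + 3) * N - nj t m j := by
  unfold nj
  intro h
  have : (2 * (2 * (t : ℤ) + 3)) * (2 * N - i - j) = 2 * (2 * t - 2 * m + 1) := by linarith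
  have e : (2 * (t : ℤ) + 3) * (2 * N - i - j) = (2 * t - 2 * m + 1) := by linarith
  rcases lt_or_ge (2 * N - i - j : ℤ) 1 with h1 | h1
  · have : (2 * N - i - j : ℤ) ≤ 0 := by omega
    nlinarith
  · nlinarith

lemma sum_chi (t m N : ℕ) (hmt : m ≤ t) (f : ℤ → ℂ)
    (hf : ∀ k, f (4 * (2 * t + 3) * N - k) = f k) :
    ∑ k ∈ Finset.Icc 1 (4 * (2 * t + 3) * N),
      ((chiP ((t : ℤ) + 1) ((m : ℤ) + 1) ((k : ℕ) : ℤ) : ℤ) : ℂ) * f k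
    = 2 * ∑ j ∈ Finset.range (2 * N), (-1 : ℂ) ^ (j : ℤ) * f (nj t m j) := by
  classical
  set G : ℤ → ℂ := fun k => ((chiP ((t : ℤ) + 1) ((m : ℤ) + 1) k : ℤ) : ℂ) * f k with hG
  have hGr : ∀ k, G (4 * (2 * t + 3) * N - k) = G k := by
    intro k; simp only [hG, chi_refl, hf]
  have e1 : ∑ k ∈ Finset.Icc 1 (4 * (2 * t + 3) * N), G ((k : ℕ) : ℤ)
      = ∑ k ∈ Finset.Icc (1 : ℤ) (4 * (2 * t + 3) * N), G k := by
    refine Finset.sum_bij' (fun k _ => (k : ℤ)) (fun k _ => k.toNat) ?_ ?_ ?_ ?_ ?_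
    · intro k hk; simp only [Finset.mem_Icc] at *; exact_mod_cast hk
    · intro k hk
      simp only [Finset.mem_Icc] at *
      refine ⟨by omega, ?_⟩
      zify
      rw [Int.toNat_of_nonneg (by omega)]; exact hk.2
    · intro k hk; simp
    · intro k hk; simp only [Finset.mem_Icc] at *; omega
    · intro k hk; rfl
  have inj : ∀ i j : ℤ, nj t m i = nj t m j → i = j := by
    intro i j h
    unfold nj at h
    have : (2 * (2 * (t : ℤ) + 3)) * i = (2 * (2 * (t : ℤ) + 3)) * j := by linarith
    exact mul_left_cancel₀ (by positivity) this
  set S := (Finset.range (2 * N)).image (fun j : ℕ => nj t m j)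
  set S' := (Finset.range (2 * N)).image (fun j : ℕ => 4 * (2 * (t : ℤ) + 3) * N - nj t m j)
  have hd : Disjoint S S' := by
    rw [Finset.disjoint_left]
    intro k hk hk'
    obtain ⟨i, _, rfl⟩ := Finset.mem_image.1 hk
    obtain ⟨j, _, h⟩ := Finset.mem_image.1 hk'
    exact nj_ne t m N hmt i j h.symm
  have e2 : ∑ k ∈ S ∪ S', G k = ∑ k ∈ Finset.Icc (1 : ℤ) (4 * (2 * t + 3) * N), G k := by
    apply Finset.sum_subset
    · intro k hk
      rcases Finset.mem_union.1 hk with hk | hk <;> obtain ⟨j, hj, rfl⟩ := Finset.mem_image.1 hk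
      all_goals
        have := nj_bd t m N hmt j (Finset.mem_range.1 hj)
        rw [Finset.mem_Icc]
        constructor <;> linarith [this.1, this.2]
    · intro k hk hk'
      by_contra hne
      rw [Finset.mem_Icc] at hk
      have hc : chiP ((t : ℤ) + 1) ((m : ℤ) + 1) k ≠ 0 := by
        intro h0; apply hne; simp [hG, h0]
      obtain ⟨j, hj, h⟩ := chi_supp t m N hmt k hk.1 hk.2 hc
      apply hk'
      rw [Finset.mem_union]
      rcases h with h | h
      · left; exact Finset.mem_image.2 ⟨j, Finset.mem_range.2 hj, h.symm⟩
      · right; exact Finset.mem_image.2 ⟨j, Finset.mem_range.2 hj, h.symm⟩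
  change ∑ k ∈ Finset.Icc 1 (4 * (2 * t + 3) * N), G ((k : ℕ) : ℤ) = _
  have s1 : ∑ k ∈ S, G k = ∑ j ∈ Finset.range (2 * N), (-1 : ℂ) ^ (j : ℤ) * f (nj t m j) := by
    rw [Finset.sum_image]
    · refine Finset.sum_congr rfl fun j _ => ?_
      simp only [hG, chi_nj t m hmt]
    · intro i _ j _ h
      have := inj i j h
      exact_mod_cast this
  have s2 : ∑ k ∈ S', G k = ∑ j ∈ Finset.range (2 * N), (-1 : ℂ) ^ (j : ℤ) * f (nj t m j) := by
    rw [Finset.sum_image]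
    · refine Finset.sum_congr rfl fun j _ => ?_
      rw [hGr]
      simp only [hG, chi_nj t m hmt]
    · intro i _ j _ h
      have := inj i j (by simpa using h)
      exact_mod_cast this
  rw [e1, ← e2, Finset.sum_union hd, s1, s2]
  ring

/-- STATEGMENT 11: the limit `L` of the quotient defining `J_N^{(t,m)}(q)` as
`q → ζ = exp(2πi/N)` with `q^N ≠ 1` exists, and
`e^{2πi(T - (2T+1-2M)²/(8(2T+1)))/N}·L` equals the Bernoulli-polynomial sum
`(2T+1) N Σ_{k=1}^{4(2T+1)N} χ_{8T+4}^{(M)}(k) e^{-2πik²/(8(2T+1)N)} B₂(k/(4(2T+1)N))`.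
Here the paper's `t, m` are `t+1, m+1` (so `2T+1 = 2t+3`, `2T+1-2M = 2t-2m+1`,
`2T+1+2M = 2t+2m+5`, `8T+4 = 8t+12`). -/
theorem stmt11 (t m N : ℕ) (hmt : m ≤ t) (hN : 1 ≤ N) (ζ : ℂ)
    (hζ : ζ = Complex.exp (2 * Real.pi * Complex.I / N)) :
    ∃ L : ℂ,
      Filter.Tendsto
        (fun q : ℂ =>
          ((-1 : ℂ) ^ N *
              q ^ (-(t : ℤ) - 1 + (N : ℤ) * ((2 * (t : ℤ) + 3) * (N : ℤ) + 1) / 2) *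
              ∑ k ∈ Finset.Icc (-(N : ℤ)) ((N : ℤ) - 1),
                (-1 : ℂ) ^ k *
                  q ^ (-(2 * (t : ℤ) + 3) * k * (k + 1) / 2 + ((m : ℤ) + 1) * k)) /
            (1 - q ^ N))
        (nhdsWithin ζ {q : ℂ | q ^ N ≠ 1}) (nhds L) ∧
      Complex.exp (2 * Real.pi * Complex.I *
          (((t : ℂ) + 1) - (2 * (t : ℂ) - 2 * m + 1) ^ 2 / (8 * (2 * (t : ℂ) + 3))) / N)
          * L =
        (2 * (t : ℂ) + 3) * N *
          ∑ k ∈ Finset.Icc 1 (4 * (2 * t + 3) * N),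
            (chiP ((t : ℤ) + 1) ((m : ℤ) + 1) (k : ℤ) : ℂ) *
              Complex.exp (-2 * Real.pi * Complex.I * (k : ℂ) ^ 2 /
                (8 * (2 * (t : ℂ) + 3) * N)) *
              bern2 ((k : ℂ) / (4 * (2 * (t : ℂ) + 3) * N)) := by
  have hN' : (N : ℂ) ≠ 0 := by exact_mod_cast (by omega)
  have ha := a_ne t
  have hz0 : ζ ≠ 0 := by rw [hζ]; exact Complex.exp_ne_zero _
  have hzN : ζ ^ N = 1 := by
    rw [hζ, ← Complex.exp_nat_mul, mul_div_cancel₀ _ hN', Complex.exp_two_pi_mul_I]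
  have hzz : ∀ z : ℤ, ζ ^ z = Complex.exp ((z : ℂ) * (2 * Real.pi * Complex.I / N)) := by
    intro z; rw [hζ, Complex.exp_int_mul]
  set A : ℤ := -(t : ℤ) - 1 + (N : ℤ) * ((2 * (t : ℤ) + 3) * (N : ℤ) + 1) / 2 with hA
  set e : ℤ → ℤ := fun k => -(2 * (t : ℤ) + 3) * k * (k + 1) / 2 + ((m : ℤ) + 1) * k with he
  have he2 : ∀ k, ((e k : ℤ) : ℂ) = (-(2 * (t : ℂ) + 3) * k * (k + 1)) / 2 + ((m : ℂ) + 1) * k := by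
    intro k
    have hd : (2 : ℤ) ∣ -(2 * (t : ℤ) + 3) * k * (k + 1) := by
      rw [mul_assoc]; exact Dvd.dvd.mul_left (Int.even_mul_succ_self k).two_dvd _
    simp only [he]
    rw [Int.cast_add, Int.cast_div hd (by norm_num)]
    push_cast; ring
  have hA2 : (A : ℂ) = -(t : ℂ) - 1 + (N : ℂ) * ((2 * (t : ℂ) + 3) * N + 1) / 2 := by
    have hd : (2 : ℤ) ∣ (N : ℤ) * ((2 * (t : ℤ) + 3) * (N : ℤ) + 1) := by
      rcases Int.even_or_odd' (N : ℤ) with ⟨q, hq | hq⟩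
      · rw [hq]; exact ⟨q * ((2 * (t : ℤ) + 3) * (2 * q) + 1), by ring⟩
      · rw [hq]; exact ⟨(2 * q + 1) * (2 * t * q + t + 3 * q + 2), by ring⟩
    simp only [hA]
    rw [Int.cast_add, Int.cast_div hd (by norm_num)]
    push_cast; ring
  set K0 : ℂ := Eg t N (2 * (t : ℂ) - 2 * m + 1) with hK0
  have hK0n : K0 ≠ 0 := by rw [hK0]; unfold Eg; exact Complex.exp_ne_zero _
  have hg : ∀ k : ℤ, K0 * ((-1 : ℂ) ^ k * ζ ^ e k) = hj t m N k := by
    intro k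
    rw [mul_left_comm]
    unfold hj
    congr 1
    rw [hK0, hzz, he2]
    unfold Eg nj
    rw [← Complex.exp_add]
    congr 1
    push_cast
    field_simp
    ring
  have hS0 : ∑ k ∈ Finset.Icc (-(N : ℤ)) ((N : ℤ) - 1), (-1 : ℂ) ^ k * ζ ^ e k = 0 := by
    apply (mul_eq_zero.1 _).resolve_left hK0n
    rw [Finset.mul_sum, Finset.sum_congr rfl (fun k _ => hg k), sum_Icc_split]
    apply Finset.sum_eq_zero
    intro j _
    have := hj_add t m N hN ((j : ℤ) - N)
    rw [sub_add_cancel] at this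
    rw [this]; ring
  set S' : ℂ := ∑ k ∈ Finset.Icc (-(N : ℤ)) ((N : ℤ) - 1), (-1 : ℂ) ^ k * ((e k : ℂ) * ζ ^ (e k - 1)) with hS'
  have hdS : HasDerivAt (fun q : ℂ => ∑ k ∈ Finset.Icc (-(N : ℤ)) ((N : ℤ) - 1), (-1 : ℂ) ^ k * q ^ e k) S' ζ := by
    apply HasDerivAt.fun_sum
    intro k _
    exact (hasDerivAt_zpow (e k) ζ (Or.inl hz0)).const_mul _
  have hdF := ((hasDerivAt_zpow A ζ (Or.inl hz0)).const_mul ((-1 : ℂ) ^ N)).mul hdS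
  refine ⟨_, tendsto_aux N hN ζ hzN _ _ hdF ?_, ?_⟩
  · change _ * (∑ k ∈ Finset.Icc (-(N : ℤ)) ((N : ℤ) - 1), (-1 : ℂ) ^ k * ζ ^ e k) = 0
    rw [hS0, mul_zero]
  rw [hS0, mul_zero, zero_add]
  -- the prefactor
  have hpre : Complex.exp (2 * Real.pi * Complex.I *
          (((t : ℂ) + 1) - (2 * (t : ℂ) - 2 * m + 1) ^ 2 / (8 * (2 * (t : ℂ) + 3))) / N)
          * ((-1) ^ N * ζ ^ A) = - K0 := by
    have h1 : (2 * Real.pi * Complex.I *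
          (((t : ℂ) + 1) - (2 * (t : ℂ) - 2 * m + 1) ^ 2 / (8 * (2 * (t : ℂ) + 3))) / N)
          + (A : ℂ) * (2 * Real.pi * Complex.I / N) =
        (-2 * Real.pi * Complex.I * (2 * (t : ℂ) - 2 * m + 1) ^ 2 / (8 * (2 * (t : ℂ) + 3) * N))
        + (((2 * t + 3) * N + 1 : ℕ) : ℂ) * (Real.pi * Complex.I) := by
      rw [hA2]
      push_cast
      field_simp
      ring
    rw [mul_left_comm, hzz, ← Complex.exp_add, h1, Complex.exp_add, Complex.exp_nat_mul,
      Complex.exp_pi_mul_I, mul_left_comm, ← pow_add, hK0]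
    unfold Eg
    have : Odd (N + ((2 * t + 3) * N + 1)) := ⟨(t + 2) * N, by ring⟩
    rw [this.neg_one_pow]; ring
  have hzS : K0 * (ζ * S') = ∑ k ∈ Finset.Icc (-(N : ℤ)) ((N : ℤ) - 1), hj t m N k * (e k : ℂ) := by
    rw [hS', Finset.mul_sum, Finset.mul_sum]
    refine Finset.sum_congr rfl fun k _ => ?_
    rw [← hg k, zpow_sub_one₀ hz0]
    field_simp
  have hzN1 : ζ * ζ ^ (N - 1) = 1 := by rw [← pow_succ', Nat.sub_add_cancel hN, hzN]
  have hL : Complex.exp (2 * Real.pi * Complex.I *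
          (((t : ℂ) + 1) - (2 * (t : ℂ) - 2 * m + 1) ^ 2 / (8 * (2 * (t : ℂ) + 3))) / N)
          * ((-1) ^ N * ζ ^ A * S' / -(N * ζ ^ (N - 1))) = (K0 * (ζ * S')) / N := by
    have hp : ζ ^ (N - 1) ≠ 0 := pow_ne_zero _ hz0
    rw [mul_div_assoc', ← mul_assoc, hpre, neg_mul, neg_div_neg_eq, div_eq_div_iff (mul_ne_zero hN' hp) hN']
    linear_combination (-K0 * S' * N) * hzN1
  rw [hL, hzS, sum_Icc_split]
  have hR := sum_chi t m N hmt (fun k => Eg t N k * bern2 ((k : ℂ) / (4 * (2 * (t : ℂ) + 3) * N))) (by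
    intro k
    have h1 := Eg_refl t N hN k
    push_cast
    rw [h1]
    congr 1
    unfold bern2
    field_simp
    ring)
  have hR' : ∑ k ∈ Finset.Icc 1 (4 * (2 * t + 3) * N),
            (chiP ((t : ℤ) + 1) ((m : ℤ) + 1) (k : ℤ) : ℂ) *
              Complex.exp (-2 * Real.pi * Complex.I * (k : ℂ) ^ 2 /
                (8 * (2 * (t : ℂ) + 3) * N)) *
              bern2 ((k : ℂ) / (4 * (2 * (t : ℂ) + 3) * N)) = 2 * ∑ j ∈ Finset.range (2 * N),
      (-1 : ℂ) ^ (j : ℤ) * (Eg t N (nj t m j) * bern2 ((nj t m j : ℂ) / (4 * (2 * (t : ℂ) + 3) * N))) := by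
    rw [← hR]
    refine Finset.sum_congr rfl fun k _ => ?_
    simp only [Eg, Int.cast_natCast, mul_assoc]
  rw [hR', two_mul N, Finset.sum_range_add, ← Finset.sum_add_distrib, Finset.mul_sum, Finset.mul_sum,
    Finset.sum_div]
  refine Finset.sum_congr rfl fun j _ => ?_
  have q1 := hj_add t m N hN ((j : ℤ) - N)
  rw [sub_add_cancel] at q1
  have q2 := hj_add t m N hN (j : ℤ)
  have q1' : hj t m N ((j : ℤ) - N) = - hj t m N j := by rw [q1]; ring
  simp only [← mul_assoc]
  push_cast
  rw [add_comm (N : ℤ) (j : ℤ)]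
  change _ = (2 * (t : ℂ) + 3) * N * 2 * (hj t m N j * _ + hj t m N (j + N) * _)
  rw [q1', q2, he2, he2]
  unfold bern2 nj
  push_cast
  field_simp
  ring
end
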